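/- For every n ≥ 2 and every k with 0 ≤ k ≤ n and n − k even, a CMDRR(n,k) exists, except that no CMDRR(n,k) exists for (n,k) ∈ {(2,2), (3,3), (4,2), (6,6)}, and with the possible exception of the 31 pairs (n,k) ∈ {(5,3), (6,2), (12,2), (12,6), (12,8), (13,3), (13,7), (14,2), (14,6), (15,3), (15,7), (15,9), (16,2), (16,10), (17,3), (17,7), (17,11), (18,2), (18,10), (19,3), (19,11), (20,2), (20,14), (21,3), (21,11), (22,2), (22,14), (23,15), (24,2), (24,14), (25,15)} for which existence is not asserted. That is: for every n ≥ 2 and 0 ≤ k ≤ n with n − k even and (n,k) not among the 4 + 31 listed pairs, a CMDRR(n,k) exists. -/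

import Mathlib

open scoped Classical

/-- A mixed doubles game: an unordered pair of teams, each team being a
(man, woman) pair, for `n` men and `n` women indexed by `Fin n`. -/
abbrev Game (n : ℕ) := Sym2 (Fin n × Fin n)

/-- A game is valid if its two teams have distinct men and distinct women. -/
def Game.valid {n : ℕ} (g : Game n) : Prop :=
  ∃ a b : Fin n × Fin n, g = s(a, b) ∧ a.1 ≠ b.1 ∧ a.2 ≠ b.2

/-- Man `m` plays in game `g`. -/
def Game.manIn {n : ℕ} (m : Fin n) (g : Game n) : Prop :=
  ∃ a b : Fin n × Fin n, g = s(a, b) ∧ a.1 = m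

/-- Woman `w` plays in game `g`. -/
def Game.womanIn {n : ℕ} (w : Fin n) (g : Game n) : Prop :=
  ∃ a b : Fin n × Fin n, g = s(a, b) ∧ a.2 = w

/-- Man `m` and woman `w` are partners (teammates) in game `g`. -/
def Game.partners {n : ℕ} (m w : Fin n) (g : Game n) : Prop :=
  (m, w) ∈ g

/-- Man `m` and woman `w` are opponents in game `g` (on different teams). -/
def Game.opposesMW {n : ℕ} (m w : Fin n) (g : Game n) : Prop :=
  ∃ a b : Fin n × Fin n, g = s(a, b) ∧ a.1 = m ∧ b.2 = w

/-- Men `m` and `m'` are opponents in game `g`. -/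
def Game.opposesMM {n : ℕ} (m m' : Fin n) (g : Game n) : Prop :=
  ∃ a b : Fin n × Fin n, g = s(a, b) ∧ a.1 = m ∧ b.1 = m'

/-- Women `w` and `w'` are opponents in game `g`. -/
def Game.opposesWW {n : ℕ} (w w' : Fin n) (g : Game n) : Prop :=
  ∃ a b : Fin n × Fin n, g = s(a, b) ∧ a.2 = w ∧ b.2 = w'

/-- A complete mixed doubles round robin tournament CMDRR(n,k). -/
structure CMDRR (n k : ℕ) where
  /-- The spouse pairs (man, woman). -/
  spouses : Finset (Fin n × Fin n)
  spouses_card : spouses.card = k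
  spouses_inj1 : ∀ p ∈ spouses, ∀ q ∈ spouses, p.1 = q.1 → p = q
  spouses_inj2 : ∀ p ∈ spouses, ∀ q ∈ spouses, p.2 = q.2 → p = q
  /-- The multiset of games. -/
  games : Multiset (Game n)
  valid : ∀ g ∈ games, g.valid
  /-- (i) no game contains both members of a spouse pair. -/
  no_spouse_game : ∀ g ∈ games, ∀ p ∈ spouses, ¬ (Game.manIn p.1 g ∧ Game.womanIn p.2 g)
  /-- (ii) every non-spouse man-woman pair partners exactly once ... -/
  partners_once : ∀ m w : Fin n, (m, w) ∉ spouses →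
    games.countP (Game.partners m w) = 1
  /-- ... and opposes exactly once. -/
  opposesMW_once : ∀ m w : Fin n, (m, w) ∉ spouses →
    games.countP (Game.opposesMW m w) = 1
  /-- (iii) a spoused man opposes every other man exactly once. -/
  spousedM_opposes : ∀ m ∈ spouses.image Prod.fst, ∀ m' : Fin n, m' ≠ m →
    games.countP (Game.opposesMM m m') = 1
  /-- (iii) a spoused woman opposes every other woman exactly once. -/
  spousedW_opposes : ∀ w ∈ spouses.image Prod.snd, ∀ w' : Fin n, w' ≠ w →
    games.countP (Game.opposesWW w w') = 1
  /-- (iv) an unspoused man opposes exactly one other unspoused man exactly twice,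
  and all other men exactly once. -/
  unspousedM_opposes : ∀ m : Fin n, m ∉ spouses.image Prod.fst →
    ∃ m' : Fin n, m' ≠ m ∧ m' ∉ spouses.image Prod.fst ∧
      games.countP (Game.opposesMM m m') = 2 ∧
      ∀ m'' : Fin n, m'' ≠ m → m'' ≠ m' → games.countP (Game.opposesMM m m'') = 1
  /-- (iv) likewise for unspoused women. -/
  unspousedW_opposes : ∀ w : Fin n, w ∉ spouses.image Prod.snd →
    ∃ w' : Fin n, w' ≠ w ∧ w' ∉ spouses.image Prod.snd ∧
      games.countP (Game.opposesWW w w') = 2 ∧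
      ∀ w'' : Fin n, w'' ≠ w → w'' ≠ w' → games.countP (Game.opposesWW w w'') = 1

/-- A round: a multiset of games in which each player appears at most once. -/
def IsRound {n : ℕ} (r : Multiset (Game n)) : Prop :=
  (∀ m : Fin n, r.countP (Game.manIn m) ≤ 1) ∧
  (∀ w : Fin n, r.countP (Game.womanIn w) ≤ 1)

/-- A full round: all players play if `n` is even; all but exactly one man and
one woman play if `n` is odd. -/
def FullRound {n : ℕ} (r : Multiset (Game n)) : Prop :=
  IsRound r ∧
  ((Even n ∧ (∀ m : Fin n, r.countP (Game.manIn m) = 1) ∧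
      (∀ w : Fin n, r.countP (Game.womanIn w) = 1)) ∨
   (¬ Even n ∧ (∃! m : Fin n, r.countP (Game.manIn m) = 0) ∧
      (∃! w : Fin n, r.countP (Game.womanIn w) = 0)))


namespace CM

/-- An oriented game: man `a` and woman `b` against man `c` and woman `d`. -/
abbrev Q (X : Type) := X × X × X × X

/-- The four kinds of pair coverage: partners, mixed opponents, men, women. -/
abbrev Kd := Fin 4

def pr {X : Type} (κ : Kd) (q : Q X) : (X × X) × (X × X) :=
  match κ with
  | 0 => ((q.1, q.2.1), (q.2.2.1, q.2.2.2))
  | 1 => ((q.1, q.2.2.2), (q.2.2.1, q.2.1))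
  | 2 => ((q.1, q.2.2.1), (q.2.2.1, q.1))
  | 3 => ((q.2.1, q.2.2.2), (q.2.2.2, q.2.1))

noncomputable def cnt {X : Type} (κ : Kd) (G : Multiset (Q X)) (x y : X) : ℕ :=
  G.countP (fun q => (pr κ q).1 = (x, y)) + G.countP (fun q => (pr κ q).2 = (x, y))

def Des (X : Type) (s : Kd → X → X → ℕ) : Prop :=
  ∃ G : Multiset (Q X), ∀ κ x y, cnt κ G x y = s κ x y

lemma cnt_zero {X : Type} (κ : Kd) (x y : X) : cnt κ (0 : Multiset (Q X)) x y = 0 := by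
  simp [cnt]

lemma cnt_add {X : Type} (κ : Kd) (G H : Multiset (Q X)) (x y : X) :
    cnt κ (G + H) x y = cnt κ G x y + cnt κ H x y := by
  simp only [cnt, Multiset.countP_add]; ring

lemma cnt_sum {X ι : Type} (s : Finset ι) (κ : Kd) (G : ι → Multiset (Q X)) (x y : X) :
    cnt κ (∑ i ∈ s, G i) x y = ∑ i ∈ s, cnt κ (G i) x y := by
  induction s using Finset.induction_on with
  | empty => simp [cnt_zero]
  | insert a s ha ih => rw [Finset.sum_insert ha, Finset.sum_insert ha, cnt_add, ih]

def qmap {X Y : Type} (f : X → Y) (q : Q X) : Q Y := (f q.1, f q.2.1, f q.2.2.1, f q.2.2.2)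

lemma pr_qmap {X Y : Type} (f : X → Y) (κ : Kd) (q : Q X) :
    pr κ (qmap f q) = (Prod.map f f (pr κ q).1, Prod.map f f (pr κ q).2) := by
  fin_cases κ <;> rfl

lemma cnt_map {X Y : Type} (f : X → Y) (hf : Function.Injective f) (κ : Kd)
    (G : Multiset (Q X)) (x y : X) :
    cnt κ (G.map (qmap f)) (f x) (f y) = cnt κ G x y := by
  simp only [cnt, Multiset.countP_map, pr_qmap, ← Multiset.countP_eq_card_filter]
  congr 2 <;> (ext q; simp [Prod.ext_iff, hf.eq_iff])

lemma cnt_map_ne {X Y : Type} (f : X → Y) (κ : Kd)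
    (G : Multiset (Q X)) (x y : Y) (h : ¬ ∃ u v, f u = x ∧ f v = y) :
    cnt κ (G.map (qmap f)) x y = 0 := by
  simp only [cnt, Nat.add_eq_zero_iff, Multiset.countP_eq_zero, Multiset.mem_map]
  constructor <;> (rintro _ ⟨q, -, rfl⟩ he; rw [pr_qmap, Prod.ext_iff] at he; exact h ⟨_, _, he⟩)

theorem glue {Y ι : Type} [Fintype ι] (X : ι → Type) (f : ∀ i, X i → Y)
    (hf : ∀ i, Function.Injective (f i)) (s : ∀ i, Kd → X i → X i → ℕ)
    (hs : ∀ i, Des (X i) (s i)) (t : Kd → Y → Y → ℕ)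
    (h0 : ∀ κ y y', t κ y y' ≠ 0 → ∃ i x x', f i x = y ∧ f i x' = y' ∧ s i κ x x' ≠ 0)
    (h1 : ∀ i κ x x', s i κ x x' ≠ 0 → t κ (f i x) (f i x') = s i κ x x')
    (h2 : ∀ i j κ x x' z z', s i κ x x' ≠ 0 → s j κ z z' ≠ 0 → f i x = f j z →
      f i x' = f j z' → i = j) : Des Y t := by
  choose G hG using hs
  refine ⟨∑ i, (G i).map (qmap (f i)), fun κ y y' => ?_⟩
  rw [cnt_sum]
  by_cases ht : t κ y y' = 0
  · rw [ht]
    refine Finset.sum_eq_zero fun i _ => ?_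
    by_cases h : ∃ u v, f i u = y ∧ f i v = y'
    · obtain ⟨u, v, rfl, rfl⟩ := h
      rw [cnt_map _ (hf i), hG]
      by_contra hne
      exact hne ((h1 i κ u v hne).symm.trans ht)
    · exact cnt_map_ne _ _ _ _ _ h
  · obtain ⟨i, x, x', rfl, rfl, hne⟩ := h0 κ y y' ht
    rw [Finset.sum_eq_single i, cnt_map _ (hf i), hG, h1 i κ x x' hne]
    · intro j _ hj
      by_cases h : ∃ u v, f j u = f i x ∧ f j v = f i x'
      · obtain ⟨u, v, hu, hv⟩ := h
        rw [← hu, ← hv, cnt_map _ (hf j), hG]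
        by_contra hne'
        exact hj (h2 j i κ u v x x' hne' hne hu hv)
      · exact cnt_map_ne _ _ _ _ _ h
    · simp

theorem Des.equiv {X Y : Type} (e : X ≃ Y) {s : Kd → X → X → ℕ} (h : Des X s)
    {t : Kd → Y → Y → ℕ} (ht : ∀ κ x x', t κ (e x) (e x') = s κ x x') : Des Y t := by
  obtain ⟨G, hG⟩ := h
  refine ⟨G.map (qmap e), fun κ y y' => ?_⟩
  obtain ⟨x, rfl⟩ := e.surjective y
  obtain ⟨x', rfl⟩ := e.surjective y'
  rw [cnt_map _ e.injective, hG, ht]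

/-- Frame specification: pairs in different groups are covered once. -/
noncomputable def frs {X I : Type} (γ : X → I) (_ : Kd) (x y : X) : ℕ := if γ x = γ y then 0 else 1

/-- Frames (holey self-orthogonal latin squares) with group sizes `w`. -/
def FrF {I : Type} (w : I → ℕ) : Prop := Des (Σ i, Fin (w i)) (frs Sigma.fst)

lemma frs_ne {X I : Type} (γ : X → I) (κ : Kd) (x y : X) : frs γ κ x y ≠ 0 ↔ γ x ≠ γ y := by
  unfold frs; split_ifs with h <;> simp [h]

theorem frF_of {X I : Type} [Finite X] (γ : X → I) (w : I → ℕ) (h : Des X (frs γ))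
    (hc : ∀ i, Nat.card {x // γ x = i} = w i) : FrF w := by
  let e : X ≃ Σ i, Fin (w i) :=
    (Equiv.sigmaFiberEquiv γ).symm.trans
      (Equiv.sigmaCongrRight fun i => Finite.equivFinOfCardEq (hc i))
  refine h.equiv e fun κ x x' => ?_
  have : ∀ x, (e x).1 = γ x := fun x => rfl
  simp only [frs, this]

/-- Transversal design with weights. -/
theorem td {R : Type} [CommRing R] [Fintype R] (μ : Fin 5 → R) (w : Fin 6 → R → ℕ)
    (hμ : ∀ i j, i ≠ j → (∃ z, w i.succ z ≠ 0) → (∃ z, w j.succ z ≠ 0) → IsUnit (μ i - μ j))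
    (hb : ∀ g : Fin 6 → R, FrF (fun c => w c (g c))) :
    FrF (fun c => ∑ z, w c z) := by
  let B : R × R → Fin 6 → R := fun b => Fin.cons b.1 (fun i => b.2 + μ i * b.1)
  have key : Des (Σ p : Fin 6 × R, Fin (w p.1 p.2)) (frs (fun y => y.1.1)) := by
    refine glue (ι := R × R) (fun b => Σ c, Fin (w c (B b c))) (fun b x => ⟨(x.1, B b x.1), x.2⟩)
      ?_ (fun b => frs Sigma.fst) (fun b => hb (B b)) _ ?_ ?_ ?_
    · rintro b ⟨c, i⟩ ⟨c', i'⟩ h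
      obtain ⟨h1, h2⟩ := Sigma.mk.inj_iff.1 h
      obtain ⟨rfl, -⟩ := Prod.mk_inj.1 h1
      simpa using h2
    · rintro κ ⟨⟨c, z⟩, i⟩ ⟨⟨c', z'⟩, i'⟩ h
      rw [frs_ne] at h
      simp only at h
      suffices ∃ b, B b c = z ∧ B b c' = z' by
        obtain ⟨b, rfl, rfl⟩ := this
        exact ⟨b, ⟨c, i⟩, ⟨c', i'⟩, rfl, rfl, by rwa [frs_ne]⟩
      have hz : ∃ z, w c z ≠ 0 := ⟨_, i.pos.ne'⟩
      have hz' : ∃ z, w c' z ≠ 0 := ⟨_, i'.pos.ne'⟩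
      induction c using Fin.cases with
      | zero =>
        induction c' using Fin.cases with
        | zero => exact absurd rfl h
        | succ j => exact ⟨(z, z' - μ j * z), by simp [B], by simp [B]⟩
      | succ k =>
        induction c' using Fin.cases with
        | zero => exact ⟨(z', z - μ k * z'), by simp [B], by simp [B]⟩
        | succ j =>
          obtain ⟨u, hu⟩ := hμ k j (fun h' => h (by rw [h'])) hz hz'
          have hu' : (μ k - μ j) * ↑u⁻¹ = 1 := by rw [← hu]; simp
          refine ⟨((↑u⁻¹ : R) * (z - z'), z - μ k * ((↑u⁻¹ : R) * (z - z'))), by simp [B], ?_⟩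
          simp only [B, Fin.cons_succ]
          linear_combination (z' - z) * hu'
    · rintro b κ ⟨c, i⟩ ⟨c', i'⟩ h
      rfl
    · rintro ⟨x, y⟩ ⟨x', y'⟩ κ ⟨c, i⟩ ⟨c', i'⟩ ⟨d, k⟩ ⟨d', k'⟩ h h' e e'
      rw [frs_ne] at h h'
      simp only at h h'
      obtain ⟨e1, e2⟩ := Sigma.mk.inj_iff.1 e
      obtain ⟨e1', e2'⟩ := Sigma.mk.inj_iff.1 e'
      obtain ⟨rfl, e3⟩ := Prod.mk_inj.1 e1
      obtain ⟨rfl, e3'⟩ := Prod.mk_inj.1 e1'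
      have hz : ∃ z, w c z ≠ 0 := ⟨_, i.pos.ne'⟩
      have hz' : ∃ z, w c' z ≠ 0 := ⟨_, i'.pos.ne'⟩
      clear e e' e1 e1' e2 e2'
      simp only at e3 e3'
      induction c using Fin.cases with
      | zero =>
        induction c' using Fin.cases with
        | zero => exact absurd rfl h
        | succ j =>
          simp only [B, Fin.cons_zero, Fin.cons_succ] at e3 e3'
          subst e3; simpa using e3'
      | succ l =>
        induction c' using Fin.cases with
        | zero =>
          simp only [B, Fin.cons_zero, Fin.cons_succ] at e3 e3'
          subst e3'; simpa using e3
        | succ j =>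
          obtain ⟨u, hu⟩ := hμ l j (fun h' => h (by rw [h'])) hz hz'
          have hu' : (μ l - μ j) * ↑u⁻¹ = 1 := by rw [← hu]; simp
          simp only [B, Fin.cons_succ] at e3 e3'
          have : x = x' := by
            linear_combination (e3 - e3') * (↑u⁻¹ : R) - (x - x') * hu'
          subst this; simpa using e3
  refine frF_of (fun y : Σ p : Fin 6 × R, Fin (w p.1 p.2) => y.1.1) _ key fun c => ?_
  let e : {y : Σ p : Fin 6 × R, Fin (w p.1 p.2) // y.1.1 = c} ≃ Σ z : R, Fin (w c z) :=
    { toFun := fun y => ⟨y.1.1.2, y.1.2.cast (by have := y.2; simp only [this])⟩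
      invFun := fun y => ⟨⟨(c, y.1), y.2⟩, rfl⟩
      left_inv := by rintro ⟨⟨⟨c', z⟩, i⟩, rfl⟩; rfl
      right_inv := by rintro ⟨z, i⟩; rfl }
  rw [Nat.card_congr e, Nat.card_sigma]
  simp


/-- Specification of a complete mixed doubles tournament: fixed points of `τ` are the spouses. -/
noncomputable def cms {X : Type} (τ σ : X → X) (κ : Kd) (x y : X) : ℕ :=
  match κ with
  | 0 => if x = y ∧ τ x = x then 0 else 1
  | 1 => if x = y ∧ τ x = x then 0 else 1
  | 2 => if x = y then 0 else if τ x = y then 2 else 1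
  | 3 => if x = y then 0 else if σ x = y then 2 else 1

/-- A tournament on the index set `X` with `k` spouse pairs. -/
def CMX (X : Type) (k : ℕ) : Prop :=
  ∃ τ σ : X → X, (∀ x, τ (τ x) = x) ∧ (∀ x, σ (σ x) = x) ∧ (∀ x, σ x = x ↔ τ x = x) ∧
    Nat.card {x // τ x = x} = k ∧ Des X (cms τ σ)

abbrev Av (n k : ℕ) : Prop := CMX (Fin n) k

theorem CMX.equiv {X Y : Type} (e : X ≃ Y) {k : ℕ} (h : CMX X k) : CMX Y k := by
  obtain ⟨τ, σ, h1, h2, h3, h4, h5⟩ := h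
  refine ⟨fun y => e (τ (e.symm y)), fun y => e (σ (e.symm y)), by simp [h1], by simp [h2], ?_, ?_, ?_⟩
  · intro y
    rw [← e.eq_symm_apply, ← e.eq_symm_apply, h3]
  · rw [← h4]
    refine Nat.card_congr (e.symm.subtypeEquiv fun y => ?_)
    rw [← e.eq_symm_apply]
  · refine h5.equiv e fun κ x x' => ?_
    simp only [cms, Equiv.symm_apply_apply, e.injective.eq_iff]

/-- Put a spouse pair at infinity. -/
theorem CMX.infty {w : ℕ} {E : Type} [Finite E] [Subsingleton E] {j : ℕ}
    (h : Av (w + Nat.card E) (j + Nat.card E)) :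
    ∃ τ σ : Fin w ⊕ E → Fin w ⊕ E, (∀ x, τ (τ x) = x) ∧ (∀ x, σ (σ x) = x) ∧
      (∀ x, σ x = x ↔ τ x = x) ∧
      Nat.card {x // τ x = x} = j + Nat.card E ∧ Des _ (cms τ σ) ∧ ∀ e, τ (Sum.inr e) = Sum.inr e := by
  let e0 : Fin (w + Nat.card E) ≃ Fin w ⊕ E :=
    finSumFinEquiv.symm.trans (Equiv.sumCongr (Equiv.refl _) (Finite.equivFin E).symm)
  obtain ⟨τ, σ, h1, h2, h3, h4, h5⟩ := CMX.equiv e0 h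
  rcases isEmpty_or_nonempty E with hE | ⟨⟨a⟩⟩
  · exact ⟨τ, σ, h1, h2, h3, h4, h5, fun e => isEmptyElim e⟩
  · have hc : Nat.card E = 1 := Nat.card_eq_one_iff_unique.2 ⟨inferInstance, ⟨a⟩⟩
    have : Nonempty {x // τ x = x} := by
      by_contra hne
      rw [not_nonempty_iff] at hne
      rw [Nat.card_of_isEmpty] at h4; omega
    obtain ⟨⟨x, hx⟩⟩ := this
    let s := Equiv.swap x (Sum.inr a)
    refine ⟨fun y => s (τ (s.symm y)), fun y => s (σ (s.symm y)), by simp [h1], by simp [h2], ?_, ?_, ?_, ?_⟩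
    · intro y
      rw [← s.eq_symm_apply, ← s.eq_symm_apply, h3]
    · rw [← h4]
      refine Nat.card_congr (s.symm.subtypeEquiv fun y => ?_)
      rw [← s.eq_symm_apply]
    · refine h5.equiv s fun κ x x' => ?_
      fin_cases κ <;> simp [cms, s.injective.eq_iff] <;> congr
    · intro e
      rw [Subsingleton.elim e a]
      simp [s, hx]

/-- Fill the groups of a frame, possibly using a spouse pair at infinity. -/
theorem fill {I E : Type} [Fintype I] [Finite E] [Subsingleton E] (w j : I → ℕ) (hF : FrF w)
    (h : ∀ i, Av (w i + Nat.card E) (j i + Nat.card E)) :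
    Av ((∑ i, w i) + Nat.card E) ((∑ i, j i) + Nat.card E) := by
  choose τ σ h1 h2 h3 h4 h5 h6 using fun i => CMX.infty (h i)
  have h6' : ∀ i e, σ i (Sum.inr e) = Sum.inr e := fun i e => (h3 i _).2 (h6 i e)
  let f : ∀ i, Fin (w i) ⊕ E → (Σ i, Fin (w i)) ⊕ E := fun i =>
    Sum.map (fun a => (⟨i, a⟩ : Σ i, Fin (w i))) id
  have hf : ∀ i, Function.Injective (f i) := fun i =>
    Sum.map_injective.2 ⟨fun a b h => by simpa using h, Function.injective_id⟩
  have inl : ∀ (ρ : ∀ i, Fin (w i) ⊕ E → Fin (w i) ⊕ E), (∀ i x, ρ i (ρ i x) = x) →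
      (∀ i e, ρ i (Sum.inr e) = Sum.inr e) → ∀ i a, ∃ b, ρ i (Sum.inl a) = Sum.inl b := by
    intro ρ hρ he i a
    rcases hh : ρ i (Sum.inl a) with b | e
    · exact ⟨b, rfl⟩
    · have := hρ i (Sum.inl a)
      rw [hh, he] at this
      cases this
  let T : (∀ i, Fin (w i) ⊕ E → Fin (w i) ⊕ E) → (Σ i, Fin (w i)) ⊕ E → (Σ i, Fin (w i)) ⊕ E :=
    fun ρ => Sum.elim (fun y => f y.1 (ρ y.1 (Sum.inl y.2))) Sum.inr
  have hT : ∀ ρ : (∀ i, Fin (w i) ⊕ E → Fin (w i) ⊕ E), (∀ i e, ρ i (Sum.inr e) = Sum.inr e) →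
      ∀ i x, T ρ (f i x) = f i (ρ i x) := by
    intro ρ he i x
    rcases x with a | e
    · rfl
    · rw [he]; rfl
  have hinv : ∀ ρ : (∀ i, Fin (w i) ⊕ E → Fin (w i) ⊕ E), (∀ i x, ρ i (ρ i x) = x) →
      (∀ i e, ρ i (Sum.inr e) = Sum.inr e) → ∀ x, T ρ (T ρ x) = x := by
    intro ρ hρ he x
    rcases x with ⟨i, a⟩ | e
    · change T ρ (f i (ρ i (Sum.inl a))) = _
      rw [hT ρ he, hρ]; rfl
    · rfl
  have hfix : ∀ (ρ : ∀ i, Fin (w i) ⊕ E → Fin (w i) ⊕ E) i a,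
      T ρ (Sum.inl ⟨i, a⟩) = Sum.inl ⟨i, a⟩ ↔ ρ i (Sum.inl a) = Sum.inl a := by
    intro ρ i a
    exact (hf i).eq_iff (a := ρ i (Sum.inl a)) (b := Sum.inl a)
  have hgrp : ∀ ρ : (∀ i, Fin (w i) ⊕ E → Fin (w i) ⊕ E), (∀ i x, ρ i (ρ i x) = x) →
      (∀ i e, ρ i (Sum.inr e) = Sum.inr e) → ∀ (y y' : Σ i, Fin (w i)), y.1 ≠ y'.1 →
      T ρ (Sum.inl y) ≠ Sum.inl y' := by
    rintro ρ hρ he ⟨i, a⟩ y' hne hh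
    obtain ⟨b, hb⟩ := inl ρ hρ he i a
    have : T ρ (Sum.inl ⟨i, a⟩) = f i (ρ i (Sum.inl a)) := rfl
    rw [this, hb] at hh
    have h' : (⟨i, b⟩ : Σ i, Fin (w i)) = y' := Sum.inl.inj hh
    exact hne (by rw [← h'])
  suffices H : CMX ((Σ i, Fin (w i)) ⊕ E) ((∑ i, j i) + Nat.card E) by
    refine H.equiv ?_
    refine (Equiv.sumCongr (Fintype.equivFinOfCardEq (n := ∑ i, w i) (by simp))
      (Finite.equivFin E)).trans finSumFinEquiv
  refine ⟨T τ, T σ, hinv τ h1 h6, hinv σ h2 h6', ?_, ?_, ?_⟩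
  · rintro (⟨i, a⟩ | e)
    · rw [hfix, hfix, h3]
    · exact Iff.rfl
  · have e1 : {x // T τ x = x} ≃ (Σ i, {a : Fin (w i) // τ i (Sum.inl a) = Sum.inl a}) ⊕ E :=
      { toFun := fun x => match x with
          | ⟨Sum.inl ⟨i, a⟩, hx⟩ => Sum.inl ⟨i, a, (hfix τ i a).1 hx⟩
          | ⟨Sum.inr e, hx⟩ => Sum.inr e
        invFun := fun x => match x with
          | Sum.inl ⟨i, a, hx⟩ => ⟨Sum.inl ⟨i, a⟩, (hfix τ i a).2 hx⟩
          | Sum.inr e => ⟨Sum.inr e, rfl⟩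
        left_inv := by rintro ⟨⟨i, a⟩ | e, hx⟩ <;> rfl
        right_inv := by rintro (⟨i, a, hx⟩ | e) <;> rfl }
    rw [Nat.card_congr e1, Nat.card_sum, Nat.card_sigma]
    congr 1
    refine Finset.sum_congr rfl fun i _ => ?_
    have e2 : {x // τ i x = x} ≃ {a : Fin (w i) // τ i (Sum.inl a) = Sum.inl a} ⊕ E :=
      { toFun := fun x => match x with
          | ⟨Sum.inl a, hx⟩ => Sum.inl ⟨a, hx⟩
          | ⟨Sum.inr e, hx⟩ => Sum.inr e
        invFun := fun x => match x with
          | Sum.inl ⟨a, hx⟩ => ⟨Sum.inl a, hx⟩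
          | Sum.inr e => ⟨Sum.inr e, h6 i e⟩
        left_inv := by rintro ⟨a | e, hx⟩ <;> rfl
        right_inv := by rintro (⟨a, hx⟩ | e) <;> rfl }
    have := h4 i
    rw [Nat.card_congr e2, Nat.card_sum] at this
    omega
  · have hspec : ∀ i κ x x', cms (T τ) (T σ) κ (f i x) (f i x') = cms (τ i) (σ i) κ x x' := by
      intro i κ x x'
      fin_cases κ <;> simp [cms, hT τ h6, hT σ h6', (hf i).eq_iff] <;> congr
    have hEE : ∀ i κ e e', cms (τ i) (σ i) κ (Sum.inr e) (Sum.inr e') = 0 := by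
      intro i κ e e'
      rw [Subsingleton.elim e' e]
      fin_cases κ <;> simp [cms, h6]
    have hEE' : ∀ κ e e', cms (T τ) (T σ) κ (Sum.inr e) (Sum.inr e') = 0 := by
      intro κ e e'
      rw [Subsingleton.elim e' e]
      fin_cases κ <;> simp [cms, T]
    have hdiff : ∀ κ (y y' : Σ i, Fin (w i)), y.1 ≠ y'.1 →
        cms (T τ) (T σ) κ (Sum.inl y) (Sum.inl y') = 1 := by
      intro κ y y' hne
      have hyy : y ≠ y' := fun h => hne (by rw [h])
      have a1 := hgrp τ h1 h6 y y' hne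
      have a2 := hgrp σ h2 h6' y y' hne
      fin_cases κ <;> simp [cms, hyy, a1, a2]
    let X : Option I → Type := fun o => o.elim (Σ i, Fin (w i)) (fun i => Fin (w i) ⊕ E)
    let F : ∀ o, X o → (Σ i, Fin (w i)) ⊕ E := fun o => match o with
      | none => Sum.inl
      | some i => f i
    let s : ∀ o, Kd → X o → X o → ℕ := fun o => match o with
      | none => frs (X := Σ i, Fin (w i)) Sigma.fst
      | some i => cms (τ i) (σ i)
    refine glue X F ?_ s ?_ _ ?_ ?_ ?_
    · rintro (_ | i)
      · exact Sum.inl_injective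
      · exact hf i
    · rintro (_ | i)
      · exact hF
      · exact h5 i
    · intro κ y y' ht
      have grp : ∀ i x x', f i x = y → f i x' = y' → ∃ o x x', F o x = y ∧ F o x' = y' ∧
          s o κ x x' ≠ 0 := by
        rintro i x x' rfl rfl
        rw [hspec] at ht
        exact ⟨some i, x, x', rfl, rfl, ht⟩
      rcases y with ⟨i, a⟩ | e <;> rcases y' with ⟨i', a'⟩ | e'
      · by_cases hi : i = i'
        · subst hi
          exact grp i (Sum.inl a) (Sum.inl a') rfl rfl
        · exact ⟨none, (⟨i, a⟩ : Σ i, Fin (w i)), (⟨i', a'⟩ : Σ i, Fin (w i)), rfl, rfl,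
            (frs_ne _ _ _ _).2 hi⟩
      · exact grp i (Sum.inl a) (Sum.inr e') rfl rfl
      · exact grp i' (Sum.inr e) (Sum.inl a') rfl rfl
      · exact absurd (hEE' κ e e') ht
    · rintro (_ | i) κ x x' hs
      · have hne := (frs_ne _ _ _ _).1 hs
        refine (hdiff κ x x' hne).trans ?_
        exact (if_neg hne).symm
      · exact hspec i κ x x'
    · have mixed : ∀ i κ (y y' : Σ i, Fin (w i)) z z', frs Sigma.fst κ y y' ≠ 0 →
          Sum.inl y = f i z → Sum.inl y' = f i z' → False := by
        intro i κ y y' z z' hs e e'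
        rw [frs_ne] at hs
        rcases z with a | a <;> rcases z' with a' | a'
        · have e := Sum.inl.inj e
          have e' := Sum.inl.inj e'
          exact hs (by rw [e, e'])
        all_goals first | (cases e; done) | (cases e'; done)
      rintro (_ | i) (_ | i') κ x x' z z' hs hs' e e'
      · rfl
      · exact (mixed i' κ x x' z z' hs e e').elim
      · exact (mixed i κ z z' x x' hs' e.symm e'.symm).elim
      · have key : ∀ i i' (x : Fin (w i) ⊕ E) (z : Fin (w i') ⊕ E), f i x = f i' z →
            i = i' ∨ ∃ e, x = Sum.inr e := by
          intro i i' x z h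
          rcases x with a | a
          · rcases z with b | b
            · left
              exact congrArg Sigma.fst (Sum.inl.inj h)
            · cases h
          · exact Or.inr ⟨a, rfl⟩
        rcases key i i' x z e with h | ⟨a, rfl⟩
        · rw [h]
        · rcases key i i' x' z' e' with h | ⟨a', rfl⟩
          · rw [h]
          · exact absurd (hEE i κ a a') hs


lemma countP_or {X : Type} (G : Multiset X) (p q r : X → Prop)
    [DecidablePred p] [DecidablePred q] [DecidablePred r]
    (hpq : ∀ g ∈ G, ¬ (p g ∧ q g)) (hr : ∀ g ∈ G, r g ↔ p g ∨ q g) :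
    G.countP r = G.countP p + G.countP q := by
  induction G using Multiset.induction_on with
  | empty => simp
  | cons a G ih =>
    have ih := ih (fun g hg => hpq g (Multiset.mem_cons_of_mem hg))
      (fun g hg => hr g (Multiset.mem_cons_of_mem hg))
    have h1 := hpq a (Multiset.mem_cons_self a G)
    have h2 := hr a (Multiset.mem_cons_self a G)
    rw [Multiset.countP_cons, Multiset.countP_cons, Multiset.countP_cons, ih]
    by_cases hp : p a <;> by_cases hq : q a <;> simp_all <;> omega

lemma cnt_def {X : Type} (κ : Kd) (G : Multiset (Q X)) (x y : X)
    [DecidablePred (fun q : Q X => (pr κ q).1 = (x, y))]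
    [DecidablePred (fun q : Q X => (pr κ q).2 = (x, y))] : cnt κ G x y =
    G.countP (fun q => (pr κ q).1 = (x, y)) + G.countP (fun q => (pr κ q).2 = (x, y)) := by
  unfold cnt; congr

def gm {n : ℕ} (q : Q (Fin n)) : Game n := s((q.1, q.2.1), (q.2.2.1, q.2.2.2))

theorem Av.cmdrr {n k : ℕ} (h : Av n k) : Nonempty (CMDRR n k) := by
  obtain ⟨τ, σ, h1, h2, h3, h4, G, hG⟩ := h
  have diag : ∀ κ : Kd, 2 ≤ κ.val → ∀ q ∈ G, (pr κ q).1.1 ≠ (pr κ q).1.2 := by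
    intro κ hκ q hq he
    have h0 : cnt κ G (pr κ q).1.1 (pr κ q).1.1 = 0 := by
      rw [hG]; fin_cases κ <;> simp_all [cms]
    have : 0 < G.countP (fun q' => (pr κ q').1 = ((pr κ q).1.1, (pr κ q).1.1)) :=
      Multiset.countP_pos.2 ⟨q, hq, Prod.ext rfl he.symm⟩
    rw [cnt_def] at h0; omega
  have dM : ∀ q ∈ G, q.1 ≠ q.2.2.1 := diag 2 (by decide)
  have dW : ∀ q ∈ G, q.2.1 ≠ q.2.2.2 := diag 3 (by decide)
  have nosp : ∀ q ∈ G, ∀ x, τ x = x → ∀ κ : Kd, κ.val < 2 →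
      (pr κ q).1 ≠ (x, x) ∧ (pr κ q).2 ≠ (x, x) := by
    intro q hq x hx κ hκ
    have h0 : cnt κ G x x = 0 := by
      rw [hG]; fin_cases κ <;> simp_all [cms]
    rw [cnt_def] at h0
    obtain ⟨ha, hb⟩ := Nat.add_eq_zero_iff.1 h0
    rw [Multiset.countP_eq_zero] at ha hb
    exact ⟨ha q hq, hb q hq⟩
  have cP : ∀ x y, (G.map gm).countP (Game.partners x y) = cms τ σ 0 x y := by
    intro x y
    rw [← hG, cnt_def, Multiset.countP_map, ← Multiset.countP_eq_card_filter]
    refine countP_or G _ _ _ ?_ ?_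
    · rintro ⟨a, b, c, d⟩ hq ⟨e1, e2⟩
      have := dM _ hq
      simp only [pr, Prod.mk.injEq] at e1 e2
      exact this (e1.1.trans e2.1.symm)
    · rintro ⟨a, b, c, d⟩ hq
      simp [Game.partners, gm, pr, eq_comm]
  have cO : ∀ x y, (G.map gm).countP (Game.opposesMW x y) = cms τ σ 1 x y := by
    intro x y
    rw [← hG, cnt_def, Multiset.countP_map, ← Multiset.countP_eq_card_filter]
    refine countP_or G _ _ _ ?_ ?_
    · rintro ⟨a, b, c, d⟩ hq ⟨e1, e2⟩
      have := dM _ hq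
      simp only [pr, Prod.mk.injEq] at e1 e2
      exact this (e1.1.trans e2.1.symm)
    · rintro ⟨a, b, c, d⟩ hq
      simp only [Game.opposesMW, gm, pr, Sym2.eq_iff]
      constructor
      · rintro ⟨u, v, (⟨rfl, rfl⟩ | ⟨rfl, rfl⟩), rfl, rfl⟩ <;> simp
      · rintro (h | h)
        · exact ⟨(a, b), (c, d), Or.inl ⟨rfl, rfl⟩, (Prod.mk.inj h).1, (Prod.mk.inj h).2⟩
        · exact ⟨(c, d), (a, b), Or.inr ⟨rfl, rfl⟩, (Prod.mk.inj h).1, (Prod.mk.inj h).2⟩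
  have cM : ∀ x y, (G.map gm).countP (Game.opposesMM x y) = cms τ σ 2 x y := by
    intro x y
    rw [← hG, cnt_def, Multiset.countP_map, ← Multiset.countP_eq_card_filter]
    refine countP_or G _ _ _ ?_ ?_
    · rintro ⟨a, b, c, d⟩ hq ⟨e1, e2⟩
      have := dM _ hq
      simp only [pr, Prod.mk.injEq] at e1 e2
      exact this (e1.1.trans e2.1.symm)
    · rintro ⟨a, b, c, d⟩ hq
      simp only [Game.opposesMM, gm, pr, Sym2.eq_iff]
      constructor
      · rintro ⟨u, v, (⟨rfl, rfl⟩ | ⟨rfl, rfl⟩), rfl, rfl⟩ <;> simp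
      · rintro (h | h)
        · exact ⟨(a, b), (c, d), Or.inl ⟨rfl, rfl⟩, (Prod.mk.inj h).1, (Prod.mk.inj h).2⟩
        · exact ⟨(c, d), (a, b), Or.inr ⟨rfl, rfl⟩, (Prod.mk.inj h).1, (Prod.mk.inj h).2⟩
  have cW : ∀ x y, (G.map gm).countP (Game.opposesWW x y) = cms τ σ 3 x y := by
    intro x y
    rw [← hG, cnt_def, Multiset.countP_map, ← Multiset.countP_eq_card_filter]
    refine countP_or G _ _ _ ?_ ?_
    · rintro ⟨a, b, c, d⟩ hq ⟨e1, e2⟩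
      have := dW _ hq
      simp only [pr, Prod.mk.injEq] at e1 e2
      exact this (e1.1.trans e2.1.symm)
    · rintro ⟨a, b, c, d⟩ hq
      simp only [Game.opposesWW, gm, pr, Sym2.eq_iff]
      constructor
      · rintro ⟨u, v, (⟨rfl, rfl⟩ | ⟨rfl, rfl⟩), rfl, rfl⟩ <;> simp
      · rintro (h | h)
        · exact ⟨(a, b), (c, d), Or.inl ⟨rfl, rfl⟩, (Prod.mk.inj h).1, (Prod.mk.inj h).2⟩
        · exact ⟨(c, d), (a, b), Or.inr ⟨rfl, rfl⟩, (Prod.mk.inj h).1, (Prod.mk.inj h).2⟩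
  let S : Finset (Fin n × Fin n) := (Finset.univ.filter (fun x => τ x = x)).image (fun x => (x, x))
  have mS : ∀ p, p ∈ S ↔ p.1 = p.2 ∧ τ p.1 = p.1 := by
    rintro ⟨a, b⟩
    simp only [S, Finset.mem_image, Finset.mem_filter, Finset.mem_univ, true_and, Prod.mk.injEq]
    constructor
    · rintro ⟨x, hx, rfl, rfl⟩; exact ⟨rfl, hx⟩
    · rintro ⟨rfl, hx⟩; exact ⟨a, hx, rfl, rfl⟩
  have mS1 : ∀ x, x ∈ S.image Prod.fst ↔ τ x = x := by
    intro x
    rw [Finset.mem_image]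
    constructor
    · rintro ⟨p, hp, rfl⟩; exact ((mS p).1 hp).2
    · intro hx; exact ⟨(x, x), (mS _).2 ⟨rfl, hx⟩, rfl⟩
  have mS2 : ∀ x, x ∈ S.image Prod.snd ↔ τ x = x := by
    intro x
    rw [Finset.mem_image]
    constructor
    · rintro ⟨p, hp, rfl⟩
      have := (mS p).1 hp
      rw [← this.1]; exact this.2
    · intro hx; exact ⟨(x, x), (mS _).2 ⟨rfl, hx⟩, rfl⟩
  refine ⟨⟨S, ?_, ?_, ?_, G.map gm, ?_, ?_, ?_, ?_, ?_, ?_, ?_, ?_⟩⟩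
  · rw [Finset.card_image_of_injective _ (fun a b h => by simpa using h), ← h4,
      Nat.card_eq_fintype_card, Fintype.card_subtype]
  · intro p hp q hq h
    have ep := ((mS p).1 hp).1
    have eq := ((mS q).1 hq).1
    exact Prod.ext (h) (ep.symm.trans (h.trans eq))
  · intro p hp q hq h
    have ep := ((mS p).1 hp).1
    have eq := ((mS q).1 hq).1
    exact Prod.ext (ep.trans (h.trans eq.symm)) (h)
  · intro g hg
    obtain ⟨q, hq, rfl⟩ := Multiset.mem_map.1 hg
    exact ⟨_, _, rfl, dM q hq, dW q hq⟩
  · rintro g hg ⟨x, y⟩ hp ⟨ha, hb⟩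
    obtain ⟨q, hq, rfl⟩ := Multiset.mem_map.1 hg
    obtain ⟨hxy, hx⟩ := (mS _).1 hp
    simp only at hxy hx ha hb
    subst hxy
    have n0 := nosp q hq x hx 0 (by decide)
    have n1 := nosp q hq x hx 1 (by decide)
    obtain ⟨a, b, c, d⟩ := q
    simp only [pr, ne_eq, Prod.mk.injEq] at n0 n1
    obtain ⟨u, v, he, hu⟩ := ha
    obtain ⟨u', v', he', hu'⟩ := hb
    simp only [gm, Sym2.eq_iff] at he he'
    rcases he with ⟨rfl, rfl⟩ | ⟨rfl, rfl⟩ <;> rcases he' with ⟨rfl, rfl⟩ | ⟨rfl, rfl⟩ <;>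
      simp_all
  · intro x y h
    rw [cP]; simp only [mS] at h
    exact if_neg h
  · intro x y h
    rw [cO]; simp only [mS] at h
    exact if_neg h
  · intro x hx y hy
    rw [mS1] at hx
    rw [cM]
    simp [cms, hx, hy.symm]
  · intro x hx y hy
    rw [mS2, ← h3] at hx
    rw [cW]
    simp [cms, hx, hy.symm]
  · intro x hx
    rw [mS1] at hx
    refine ⟨τ x, hx, ?_, ?_, ?_⟩
    · rw [mS1, h1]; exact fun h => hx h.symm
    · rw [cM]; simp [cms, Ne.symm hx]
    · intro y hy hy'
      rw [cM]; simp [cms, hy.symm, hy'.symm]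
  · intro x hx
    rw [mS2, ← h3] at hx
    refine ⟨σ x, hx, ?_, ?_, ?_⟩
    · rw [mS2, ← h3, h2]; exact fun h => hx h.symm
    · rw [cW]; simp [cms, Ne.symm hx]
    · intro y hy hy'
      rw [cW]; simp [cms, hy.symm, hy'.symm]


/-! Kernel-checked verification of explicit designs given by base games. -/

def rotl : List ℕ → ℕ → ℕ → ℕ
  | [], _, x => x
  | l :: ls, j, x => bif Nat.ble (x + 1) l then (x + j) % l else l + rotl ls j (x - l)

def sumTo (n : ℕ) (f : ℕ → ℕ) : ℕ := Nat.rec 0 (fun i s => s + f i) n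

lemma sumTo_eq (n : ℕ) (f : ℕ → ℕ) : sumTo n f = ∑ i ∈ Finset.range n, f i := by
  induction n with
  | zero => rfl
  | succ n ih => rw [Finset.sum_range_succ, ← ih]; rfl

/-- Weight of an ordered pair. -/
def pw (n x y : ℕ) : ℕ := 2 ^ (12 * (x % n * n + y % n))

def e0 (n a b c d : ℕ) : ℕ := pw n a b + pw n c d
def e1 (n a b c d : ℕ) : ℕ := pw n a d + pw n c b
def e2 (n a _b c _d : ℕ) : ℕ := pw n a c + pw n c a
def e3 (n _a b _c d : ℕ) : ℕ := pw n b d + pw n d b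

/-- Base games: orbit length and the four players. -/
abbrev BG := ℕ × ℕ × ℕ × ℕ × ℕ

def sumB (lens : List ℕ) (f : ℕ → ℕ → ℕ → ℕ → ℕ) : List BG → ℕ
  | [] => 0
  | (l, a, b, c, d) :: bs =>
    sumTo l (fun j => f (rotl lens j a) (rotl lens j b) (rotl lens j c) (rotl lens j d)) +
      sumB lens f bs

def spv (n : ℕ) (s : ℕ → ℕ → ℕ) : ℕ :=
  sumTo n fun x => sumTo n fun y => s x y * pw n x y

def chk2 (n : ℕ) (lens : List ℕ) (bs : List BG) (v v' : ℕ) : Bool :=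
  Nat.beq (sumB lens (e0 n) bs) v && (Nat.beq (sumB lens (e1 n) bs) v &&
  (Nat.beq (sumB lens (e2 n) bs) v' && (Nat.beq (sumB lens (e3 n) bs) v' &&
  Nat.ble (sumB lens (fun _ _ _ _ => 2) bs) 4095)))

/-- Unpack base games from the base 100 digits of a number. -/
def dec : ℕ → ℕ → List BG
  | 0, _ => []
  | f + 1, N => (N % 100, N / 100 % 100, N / 10000 % 100, N / 1000000 % 100, N / 100000000 % 100) ::
      dec f (N / 10000000000)

lemma dig_unique (B : ℕ) : ∀ (N : ℕ) (c d : Fin N → ℕ), (∀ i, c i < B) → (∀ i, d i < B) →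
    ∑ i, c i * B ^ i.val = ∑ i, d i * B ^ i.val → ∀ i, c i = d i := by
  intro N
  induction N with
  | zero => intro c d _ _ _ i; exact i.elim0
  | succ N ih =>
    intro c d hc hd h
    have key : ∀ c : Fin (N + 1) → ℕ, ∑ i, c i * B ^ i.val =
        c 0 + B * ∑ i : Fin N, c i.succ * B ^ i.val := by
      intro c
      rw [Fin.sum_univ_succ, Finset.mul_sum]
      simp only [Fin.val_zero, pow_zero, mul_one, Fin.val_succ, pow_succ]
      congr 1
      exact Finset.sum_congr rfl fun i _ => by ring
    rw [key, key] at h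
    have hB : 0 < B := lt_of_le_of_lt (Nat.zero_le _) (hc 0)
    have h0 : c 0 = d 0 := by
      have := congrArg (· % B) h
      simpa [Nat.add_mul_mod_self_left, Nat.mod_eq_of_lt (hc 0), Nat.mod_eq_of_lt (hd 0)] using this
    rw [h0] at h
    have h' := Nat.eq_of_mul_eq_mul_left hB (Nat.add_left_cancel h)
    have := ih (fun i => c i.succ) (fun i => d i.succ) (fun i => hc _) (fun i => hd _) h'
    intro i
    induction i using Fin.cases with
    | zero => exact h0
    | succ i => exact this i

def pwF {n : ℕ} (p : Fin n × Fin n) : ℕ := 4096 ^ (finProdFinEquiv p).val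

lemma pw_eq {n : ℕ} (x y : Fin n) : pw n x y = pwF (x, y) := by
  unfold pw pwF
  rw [pow_mul, Nat.mod_eq_of_lt x.2, Nat.mod_eq_of_lt y.2]
  simp only [finProdFinEquiv_apply_val]
  norm_num
  ring

lemma pw_ofNat {n : ℕ} [NeZero n] (x y : ℕ) : pw n x y = pwF (Fin.ofNat n x, Fin.ofNat n y) := by
  rw [← pw_eq]; simp [pw]

lemma cnt_cons {X : Type} (κ : Kd) (q : Q X) (G : Multiset (Q X)) (x y : X) :
    cnt κ (q ::ₘ G) x y = cnt κ G x y + ((if (pr κ q).1 = (x, y) then 1 else 0) +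
      (if (pr κ q).2 = (x, y) then 1 else 0)) := by
  simp only [cnt, Multiset.countP_cons]; ring

lemma cnt_val {n : ℕ} (κ : Kd) (L : List (Q (Fin n))) :
    (L.map fun q => pwF (pr κ q).1 + pwF (pr κ q).2).sum =
      ∑ p : Fin n × Fin n, cnt κ (L : Multiset (Q (Fin n))) p.1 p.2 * pwF p := by
  induction L with
  | nil => simp [cnt_zero]
  | cons q L ih =>
    rw [List.map_cons, List.sum_cons, ih, ← Multiset.cons_coe]
    simp only [cnt_cons, add_mul, Finset.sum_add_distrib, ite_mul, one_mul, zero_mul, Prod.mk.eta,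
      Finset.sum_ite_eq, Finset.mem_univ, if_true]
    ring

lemma cnt_le {X : Type} (κ : Kd) (G : Multiset (Q X)) (x y : X) : cnt κ G x y ≤ 2 * G.card := by
  unfold cnt
  have h1 := Multiset.countP_le_card (fun q => (pr κ q).1 = (x, y)) G
  have h2 := Multiset.countP_le_card (fun q => (pr κ q).2 = (x, y)) G
  omega

lemma cnt_of_val {n : ℕ} (κ : Kd) (L : List (Q (Fin n))) (hL : 2 * L.length < 4096)
    (s : Fin n → Fin n → ℕ) (hs : ∀ x y, s x y < 4096)
    (h : (L.map fun q => pwF (pr κ q).1 + pwF (pr κ q).2).sum =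
      ∑ p : Fin n × Fin n, s p.1 p.2 * pwF p) (x y : Fin n) :
    cnt κ (L : Multiset (Q (Fin n))) x y = s x y := by
  rw [cnt_val] at h
  have key : ∀ c : Fin n → Fin n → ℕ, ∑ p : Fin n × Fin n, c p.1 p.2 * pwF p =
      ∑ i : Fin (n * n), c (finProdFinEquiv.symm i).1 (finProdFinEquiv.symm i).2 * 4096 ^ i.val := by
    intro c
    rw [← finProdFinEquiv.sum_comp]
    exact Finset.sum_congr rfl fun p _ => by rw [Equiv.symm_apply_apply]; rfl
  rw [key, key] at h
  have := dig_unique 4096 (n * n) _ _ (fun i => lt_of_le_of_lt (cnt_le _ _ _ _) (by simpa using hL))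
    (fun i => hs _ _) h (finProdFinEquiv (x, y))
  simpa using this

def gl (lens : List ℕ) (bs : List BG) : List (Q ℕ) :=
  bs.flatMap fun b => (List.range b.1).map fun j => qmap (rotl lens j) b.2

lemma sumB_eq (lens : List ℕ) (f : ℕ → ℕ → ℕ → ℕ → ℕ) (bs : List BG) :
    sumB lens f bs = ((gl lens bs).map fun q => f q.1 q.2.1 q.2.2.1 q.2.2.2).sum := by
  induction bs with
  | nil => rfl
  | cons b bs ih =>
    obtain ⟨l, a, b, c, d⟩ := b
    simp only [gl, List.flatMap_cons, List.map_append, List.sum_append] at ih ⊢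
    rw [sumB, ih, sumTo_eq, List.map_map, Finset.sum_range]
    congr 1
    rw [← List.sum_ofFn]
    congr 1
    rw [List.ofFn_eq_map, ← List.map_coe_finRange_eq_range, List.map_map]
    rfl

theorem chk_sound {n : ℕ} [NeZero n] (lens : List ℕ) (bs : List BG) (s s' : ℕ → ℕ → ℕ)
    (hs : ∀ x y, s x y < 4096) (hs' : ∀ x y, s' x y < 4096)
    (h : chk2 n lens bs (spv n s) (spv n s') = true) :
    Des (Fin n) (fun κ x y => if κ.val < 2 then s x y else s' x y) := by
  simp only [chk2, Bool.and_eq_true, Nat.beq_eq, Nat.ble_eq, sumB_eq] at h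
  obtain ⟨h0, h1, h2, h3, hl⟩ := h
  have hlen : 2 * ((gl lens bs).map (qmap (Fin.ofNat n))).length < 4096 := by
    simp at hl ⊢; omega
  have hspv : ∀ s : ℕ → ℕ → ℕ, spv n s = ∑ p : Fin n × Fin n, s p.1 p.2 * pwF p := by
    intro s
    simp only [spv, sumTo_eq]
    rw [Fintype.sum_prod_type, Finset.sum_range]
    refine Finset.sum_congr rfl fun x _ => ?_
    rw [Finset.sum_range]
    exact Finset.sum_congr rfl fun y _ => by rw [pw_eq]
  rw [hspv] at h0 h1 h2 h3
  refine ⟨((gl lens bs).map (qmap (Fin.ofNat n)) : List _), fun κ x y => ?_⟩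
  fin_cases κ
  · refine cnt_of_val 0 _ hlen (fun x y => s x y) (fun x y => hs _ _) (Eq.trans ?_ h0) x y
    rw [List.map_map]; congr 2; ext q; simp only [e0, pw_ofNat]; rfl
  · refine cnt_of_val 1 _ hlen (fun x y => s x y) (fun x y => hs _ _) (Eq.trans ?_ h1) x y
    rw [List.map_map]; congr 2; ext q; simp only [e1, pw_ofNat]; rfl
  · refine cnt_of_val 2 _ hlen (fun x y => s' x y) (fun x y => hs' _ _) (Eq.trans ?_ h2) x y
    rw [List.map_map]; congr 2; ext q; simp only [e2, pw_ofNat]; rfl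
  · refine cnt_of_val 3 _ hlen (fun x y => s' x y) (fun x y => hs' _ _) (Eq.trans ?_ h3) x y
    rw [List.map_map]; congr 2; ext q; simp only [e3, pw_ofNat]; rfl

/-- Group labels given by segments (length, modulus, offset). -/
def lab : List (ℕ × ℕ × ℕ) → ℕ → ℕ
  | [], _ => 0
  | (l, a, o) :: r, x => bif Nat.ble (x + 1) l then o + x % a else lab r (x - l)

def Fr (l : List ℕ) : Prop := FrF (fun i : Fin l.length => l.get i)

def frsp (sg : List (ℕ × ℕ × ℕ)) (x y : ℕ) : ℕ := bif Nat.beq (lab sg x) (lab sg y) then 0 else 1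

def allTo (n : ℕ) (f : ℕ → Bool) : Bool := Nat.rec true (fun i s => s && f i) n

lemma allTo_iff (n : ℕ) (f : ℕ → Bool) : allTo n f = true ↔ ∀ i < n, f i = true := by
  induction n with
  | zero => simp [allTo]
  | succ n ih =>
    have : allTo (n + 1) f = (allTo n f && f n) := rfl
    rw [this, Bool.and_eq_true, ih]
    constructor
    · rintro ⟨h1, h2⟩ i hi
      rcases Nat.lt_succ_iff_lt_or_eq.1 hi with h | rfl
      · exact h1 i h
      · exact h2
    · exact fun h => ⟨fun i hi => h i (by omega), h n (by omega)⟩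

def cntlab (sg : List (ℕ × ℕ × ℕ)) (n : ℕ) : ℕ → List ℕ → Bool
  | _, [] => true
  | i, w :: l => Nat.beq (sumTo n fun x => bif Nat.beq (lab sg x) i then 1 else 0) w &&
      cntlab sg n (i + 1) l

lemma cntlab_get (sg : List (ℕ × ℕ × ℕ)) (n : ℕ) (l : List ℕ) : ∀ i, cntlab sg n i l = true →
    ∀ j (hj : j < l.length), (sumTo n fun x => bif Nat.beq (lab sg x) (i + j) then 1 else 0) = l[j] := by
  induction l with
  | nil => intro i _ j hj; simp at hj
  | cons w l ih =>
    intro i h j hj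
    simp only [cntlab, Bool.and_eq_true, Nat.beq_eq] at h
    cases j with
    | zero => simpa using h.1
    | succ j =>
      have := ih (i + 1) h.2 j (by simpa using hj)
      rw [List.getElem_cons_succ, ← this]
      congr 1; ext x; congr 2; omega

/-- Frame check for the list of group sizes `l`. -/
def chkF (n : ℕ) (lens : List ℕ) (sg : List (ℕ × ℕ × ℕ)) (bs : List BG) (l : List ℕ) : Bool :=
  (allTo n fun x => Nat.ble (lab sg x + 1) l.length) && (cntlab sg n 0 l &&
    chk2 n lens bs (spv n (frsp sg)) (spv n (frsp sg)))

theorem fr_of {n : ℕ} [NeZero n] {lens : List ℕ} {sg : List (ℕ × ℕ × ℕ)} {bs : List BG} {l : List ℕ}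
    (h : chkF n lens sg bs l = true) : Fr l := by
  simp only [chkF, Bool.and_eq_true, allTo_iff, Nat.ble_eq] at h
  obtain ⟨h1, h2, h3⟩ := h
  have hlt : ∀ x y, frsp sg x y < 4096 := by
    intro x y; unfold frsp; cases Nat.beq (lab sg x) (lab sg y) <;> simp
  have hD := chk_sound lens bs _ _ hlt hlt h3
  let γ : Fin n → Fin l.length := fun x => ⟨lab sg x, h1 x x.2⟩
  refine frF_of γ _ (hD.equiv (Equiv.refl _) ?_) ?_
  · intro κ x y
    simp only [frs, frsp, γ, Equiv.refl_apply, Fin.mk.injEq, ite_self]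
    by_cases h : lab sg x = lab sg y
    · simp [h]
    · have : Nat.beq (lab sg x) (lab sg y) = false := by
        rw [Bool.eq_false_iff, ne_eq, Nat.beq_eq]; exact h
      simp [h, this]
  · intro i
    have := cntlab_get sg n l 0 h2 i i.2
    rw [sumTo_eq, Finset.sum_range] at this
    rw [List.get_eq_getElem, ← this, Nat.card_eq_fintype_card, Fintype.card_subtype,
      Finset.card_filter]
    refine Finset.sum_congr rfl fun x _ => ?_
    simp only [γ, Fin.ext_iff, zero_add]
    by_cases h : lab sg x = i
    · simp [h]
    · have : Nat.beq (lab sg x) i = false := by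
        rw [Bool.eq_false_iff, ne_eq, Nat.beq_eq]; exact h
      simp [h, this]

/-- The matching given by segments: `(l, 0)` spouses, `(l, 1)` a cycle matched to itself by a
half turn, `(l, 2)` matched with the next `l` points, which form a segment `(l, 3)`. -/
def tau : List (ℕ × ℕ) → ℕ → ℕ → ℕ
  | [], _, x => x
  | (l, k) :: r, o, x => bif Nat.ble (x + 1) (o + l) then
      (bif Nat.beq k 0 then x else bif Nat.beq k 1 then o + (x - o + l / 2) % l
        else bif Nat.beq k 2 then x + l else x - l)
      else tau r (o + l) x

def cmP (sg : List (ℕ × ℕ)) (x y : ℕ) : ℕ :=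
  bif Nat.beq x y && Nat.beq (tau sg 0 x) x then 0 else 1

def cmM (sg : List (ℕ × ℕ)) (x y : ℕ) : ℕ :=
  bif Nat.beq x y then 0 else bif Nat.beq (tau sg 0 x) y then 2 else 1

def chkC (n : ℕ) (lens : List ℕ) (sg : List (ℕ × ℕ)) (bs : List BG) (k : ℕ) : Bool :=
  (allTo n fun x => Nat.ble (tau sg 0 x + 1) n && Nat.beq (tau sg 0 (tau sg 0 x)) x) &&
  (Nat.beq (sumTo n fun x => bif Nat.beq (tau sg 0 x) x then 1 else 0) k &&
    chk2 n lens bs (spv n (cmP sg)) (spv n (cmM sg)))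

lemma beq_dec (a b : ℕ) : Nat.beq a b = decide (a = b) := by
  rw [Bool.eq_iff_iff, Nat.beq_eq, decide_eq_true_iff]

theorem av_of {n : ℕ} [NeZero n] {lens : List ℕ} {sg : List (ℕ × ℕ)} {bs : List BG} {k : ℕ}
    (h : chkC n lens sg bs k = true) : Av n k := by
  simp only [chkC, Bool.and_eq_true, allTo_iff, Nat.ble_eq, Nat.beq_eq] at h
  obtain ⟨h1, h2, h3⟩ := h
  have hlt : ∀ x y, cmP sg x y < 4096 := by
    intro x y; unfold cmP; cases (Nat.beq x y && Nat.beq (tau sg 0 x) x) <;> simp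
  have hlt' : ∀ x y, cmM sg x y < 4096 := by
    intro x y; unfold cmM
    cases Nat.beq x y <;> cases Nat.beq (tau sg 0 x) y <;> simp
  have hD := chk_sound lens bs _ _ hlt hlt' h3
  let τ : Fin n → Fin n := fun x => ⟨tau sg 0 x, (h1 x x.2).1⟩
  have hτ : ∀ x, τ (τ x) = x := fun x => Fin.ext (h1 x x.2).2
  refine ⟨τ, τ, hτ, hτ, fun x => Iff.rfl, ?_, hD.equiv (Equiv.refl _) ?_⟩
  · rw [← h2, sumTo_eq, Finset.sum_range, Nat.card_eq_fintype_card, Fintype.card_subtype,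
      Finset.card_filter]
    refine Finset.sum_congr rfl fun x _ => ?_
    simp only [τ, Fin.ext_iff, beq_dec]
    by_cases h : tau sg 0 x = x <;> simp [h]
  · intro κ x y
    have e1 : (τ x = x) = (tau sg 0 x = x) := by simp [τ, Fin.ext_iff]
    have e2 : (τ x = y) = (tau sg 0 x = y) := by simp [τ, Fin.ext_iff]
    have e3 : (x = y) = (x.val = y.val) := by simp [Fin.ext_iff]
    fin_cases κ
    · simp only [cms, cmP, beq_dec, Equiv.refl_apply, e1, e3]
      by_cases h : x.val = y.val <;> by_cases h' : tau sg 0 x = x <;> simp [h, h']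
    · simp only [cms, cmP, beq_dec, Equiv.refl_apply, e1, e3]
      by_cases h : x.val = y.val <;> by_cases h' : tau sg 0 x = x <;> simp [h, h']
    · simp only [cms, cmM, beq_dec, Equiv.refl_apply, e2, e3]
      by_cases h : x.val = y.val <;> by_cases h' : tau sg 0 x = y <;> simp [h, h']
    · simp only [cms, cmM, beq_dec, Equiv.refl_apply, e2, e3]
      by_cases h : x.val = y.val <;> by_cases h' : tau sg 0 x = y <;> simp [h, h']


theorem fr_1_10_2 : Fr (List.replicate 10 1 ++ [2]) :=
  fr_of (n := 12) (lens := [10]) (sg := [(11, 11, 0), (1, 1, 10)])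
    (bs := dec 7 903070010110203001002110800100310040010060109001005041000100705020005)
    (by decide +kernel)

theorem fr_1_11_1 : Fr (List.replicate 12 1) :=
  fr_of (n := 12) (lens := [11]) (sg := [(12, 12, 0)])
    (bs := dec 6 30107001104050300110511080011080406001101031100110702010011)
    (by decide +kernel)

theorem fr_1_11_2 : Fr (List.replicate 11 1 ++ [2]) :=
  fr_of (n := 13) (lens := [11]) (sg := [(12, 12, 0), (1, 1, 11)])
    (bs := dec 7 611010011091206001108040900110301050011120507001110020300111103100011)
    (by decide +kernel)

theorem fr_1_11_4 : Fr (List.replicate 11 1 ++ [4]) :=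
  fr_of (n := 15) (lens := [11]) (sg := [(12, 12, 0), (3, 1, 11)])
    (bs := dec 9 81410001101110700110512040011041301001107010300110904140011130208001112030200110305110011)
    (by decide +kernel)

theorem fr_1_12_2 : Fr (List.replicate 12 1 ++ [2]) :=
  fr_of (n := 14) (lens := [12]) (sg := [(13, 13, 0), (1, 1, 12)])
    (bs := dec 8 10130200120504080012130203001206121100120205120012070306001208011000121106050006)
    (by decide +kernel)

theorem fr_1_13_2 : Fr (List.replicate 13 1 ++ [2]) :=
  fr_of (n := 15) (lens := [13]) (sg := [(14, 14, 0), (1, 1, 13)])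
    (bs := dec 8 12031100130413020013051412001309040100130602030013140108001311050700130306130013)
    (by decide +kernel)

theorem fr_1_14_2 : Fr (List.replicate 14 1 ++ [2]) :=
  fr_of (n := 16) (lens := [14]) (sg := [(15, 15, 0), (1, 1, 14)])
    (bs := dec 9 120109001409031500140602140014031513001407040800141106020014010507001413140100140507120007)
    (by decide +kernel)

theorem fr_1_14_4 : Fr (List.replicate 14 1 ++ [4]) :=
  fr_of (n := 18) (lens := [14]) (sg := [(15, 15, 0), (3, 1, 14)])
    (bs := dec 11 2171300140416120014121402001409151100141106170014050210001413041600140703060014150501001414010700140107080007)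
    (by decide +kernel)

theorem fr_1_15_2 : Fr (List.replicate 15 1 ++ [2]) :=
  fr_of (n := 17) (lens := [15]) (sg := [(16, 16, 0), (1, 1, 15)])
    (bs := dec 9 141511001511160700150501140015100709001512041000150806130015160205001504031200151505060015)
    (by decide +kernel)

theorem fr_1_15_4 : Fr (List.replicate 15 1 ++ [4]) :=
  fr_of (n := 19) (lens := [15]) (sg := [(16, 16, 0), (3, 1, 15)])
    (bs := dec 11 14161300151215080015091806001510170300150106140015040309001511040200150702180015030717001505011600150205150015)
    (by decide +kernel)

theorem fr_1_15_6 : Fr (List.replicate 15 1 ++ [6]) :=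
  fr_of (n := 21) (lens := [15]) (sg := [(16, 16, 0), (5, 1, 15)])
    (bs := dec 13 815090015041902001503180800151017130015131605001506201000150902030015050620001519040100151107180015070117001502051600151403150015)
    (by decide +kernel)

theorem fr_1_17_7 : Fr (List.replicate 17 1 ++ [7]) :=
  fr_of (n := 24) (lens := [17]) (sg := [(18, 18, 0), (6, 1, 17)])
    (bs := dec 15 102001001709191000170222060017141716001707210400170323090017011813001712040200172306140017160522001711082100172003070017190712001718021500170601170017)
    (by decide +kernel)

theorem fr_1_18_2 : Fr (List.replicate 18 1 ++ [2]) :=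
  fr_of (n := 20) (lens := [18]) (sg := [(19, 19, 0), (1, 1, 18)])
    (bs := dec 11 4020700181803060018081809001801060500181208170018161910001813011500180704140018150719001806051600180209110009)
    (by decide +kernel)

theorem fr_1_18_4 : Fr (List.replicate 18 1 ++ [4]) :=
  fr_of (n := 22) (lens := [18]) (sg := [(19, 19, 0), (3, 1, 18)])
    (bs := dec 13 2001040018210503001802061500180821090018112017001812070800180618130018171907001810081200181302160018050419001818031000181509060009)
    (by decide +kernel)

theorem fr_1_19_7 : Fr (List.replicate 19 1 ++ [7]) :=
  fr_of (n := 26) (lens := [19]) (sg := [(20, 20, 0), (6, 1, 19)])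
    (bs := dec 16 321160019101914001901240200191222040019152518001914230700190720050019160611001913010300191102250019240513001923040800192208170019210301001920070600191909150019)
    (by decide +kernel)

theorem fr_1_20_7 : Fr (List.replicate 20 1 ++ [7]) :=
  fr_of (n := 27) (lens := [20]) (sg := [(21, 21, 0), (6, 1, 20)])
    (bs := dec 17 18211500201323050020012614002011251700200620020020152216002004240600200203130020090104002026051200201706250020240807002005042300201202220020210903002016072000200810180010)
    (by decide +kernel)

theorem fr_1_27_7 : Fr (List.replicate 27 1 ++ [7]) :=
  fr_of (n := 34) (lens := [27]) (sg := [(28, 28, 0), (6, 1, 27)])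
    (bs := dec 20 2320300270529070027063317002701301800272031150027242709002722280200271610240027150112002712082100270403100027180705002726132200270305330027321220002731092600272304300027290616002719112800272702230027)
    (by decide +kernel)

theorem fr_1_29_1 : Fr (List.replicate 30 1) :=
  fr_of (n := 30) (lens := [29]) (sg := [(30, 30, 0)])
    (bs := dec 15 51211002920040800291329020029270919002914051200291207150029161003002926032700290206240029210817002929111400290102210029110126002917130700291514200029)
    (by decide +kernel)

theorem fr_1_30_8 : Fr (List.replicate 30 1 ++ [8]) :=
  fr_of (n := 38) (lens := [30]) (sg := [(31, 31, 0), (7, 1, 30)])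
    (bs := dec 23 21322300300737030030293015003003311100300636050030283307003022351700300134180030020614003005011200301314020030040724003027022100302512280030370919003026103600301204350030341101003033082200303205200030090331003023133000302415090015)
    (by decide +kernel)

theorem fr_1_33_9 : Fr (List.replicate 33 1 ++ [9]) :=
  fr_of (n := 42) (lens := [33]) (sg := [(34, 34, 0), (8, 1, 33)])
    (bs := dec 25 1033290033323703003306360900331234190033304110003320392100330440260033183820003317352200331604060033231002003322114100331107280033050630003301031600330901150033311307003326094000330312390033081638003337082700331514360033070235003328053400332915330033)
    (by decide +kernel)

theorem fr_1_9_4 : Fr (List.replicate 9 1 ++ [4]) :=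
  fr_of (n := 13) (lens := [9]) (sg := [(10, 10, 0), (3, 1, 9)])
    (bs := dec 8 4090600090210050009081103000907120800090501120009060411000903021000090103090009)
    (by decide +kernel)

theorem fr_1p10_2p5_6 : Fr (List.replicate 10 1 ++ List.replicate 5 2 ++ [6]) :=
  fr_of (n := 26) (lens := [10, 10]) (sg := [(15, 15, 0), (6, 6, 10), (5, 1, 15)])
    (bs := dec 31 721041010002406101003230210101612071010022216101011200510100925191010141301101010211200101425060010192202001004201500101323140010122416001006131100101101180010070319001005170300102511130010021225001024040500101911241010231417001008192300101518220010221001001009022100101714211010181620001020150900100305080005)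
    (by decide +kernel)

theorem fr_1p13_1 : Fr (List.replicate 14 1) :=
  fr_of (n := 14) (lens := [13]) (sg := [(14, 14, 0)])
    (bs := dec 7 601090013111304001304050200130204070013090310001301061300130502010013)
    (by decide +kernel)

theorem fr_1p18_2p3_2 : Fr (List.replicate 18 1 ++ List.replicate 4 2) :=
  fr_of (n := 26) (lens := [6, 6, 6, 6]) (sg := [(21, 21, 0), (4, 4, 18), (1, 1, 21)])
    (bs := dec 55 125141806162224060613160206060119150606151817060604200006060015050606121403060615221412061520091806092507060610230106060721080606141309060624230412060618001206082404180616240712061321091206211402120602241906060320211206050720060624172106062019101206232501120618082306062012180606032208000605120700061121230006061320000607182200060915020006130919000620160900061819040006191406000621241700062317160006022312000622201400061625210006240111000612111000061507180006081015000601021300060913251206250603000614082500062319251806141517120308091106030403010003)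
    (by decide +kernel)

theorem fr_1p24_7 : Fr (List.replicate 24 1 ++ [7]) :=
  fr_of (n := 31) (lens := [24]) (sg := [(25, 25, 0), (6, 1, 24)])
    (bs := dec 19 827100024162602002407240100242125140024052918002419300300242228130024020522002406110700241307080024290216002423082000243003120024031028002415042700241006260024250105002418092400241112230012)
    (by decide +kernel)

theorem fr_2_10_8 : Fr (List.replicate 10 2 ++ [8]) :=
  fr_of (n := 28) (lens := [20]) (sg := [(20, 10, 0), (8, 1, 10)])
    (bs := dec 17 14261500201725060020052203002004230700200620120020032119002002270900201624080020190304002027091800202606170020080725002015022400200705230020130822002012012100201804200020)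
    (by decide +kernel)

theorem fr_2_11_8 : Fr (List.replicate 11 2 ++ [8]) :=
  fr_of (n := 30) (lens := [22]) (sg := [(22, 11, 0), (8, 1, 11)])
    (bs := dec 18 142213002212231900222026170022132709002215281000221729080022042512002218240200220501030022030915002210032900220105280022210727002226042000220706250022080224002209102300222208050022)
    (by decide +kernel)

theorem fr_2_5_4 : Fr ([2, 2, 2, 2, 2, 4]) :=
  fr_of (n := 14) (lens := [10]) (sg := [(10, 5, 0), (4, 1, 5)])
    (bs := dec 8 2120800100411030010011304001008100600101303090010090212001011040100100301100010)
    (by decide +kernel)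

theorem fr_2_6_0 : Fr ([2, 2, 2, 2, 2, 2]) :=
  fr_of (n := 12) (lens := [12]) (sg := [(12, 6, 0)])
    (bs := dec 5 10021100120504070012070504001201030500120401090012)
    (by decide +kernel)

theorem fr_2_9_8 : Fr (List.replicate 9 2 ++ [8]) :=
  fr_of (n := 26) (lens := [18]) (sg := [(18, 9, 0), (8, 1, 9)])
    (bs := dec 16 419160018102207001801211400181520050018022301001814181000181124130018172506001825070200182404120018230503001805062200182101080018200811001806021900181803150018)
    (by decide +kernel)

theorem fr_3_5_1 : Fr ([3, 3, 3, 3, 3, 1]) :=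
  fr_of (n := 16) (lens := [5, 5, 5]) (sg := [(15, 5, 0), (1, 1, 5)])
    (bs := dec 21 101413070511150907050513110705081512140503110714050408050705010908070515100107050610031405131115070504111200050215030005140613000506070800051109020005031214000513140100050108040005071306000509021500051201090005)
    (by decide +kernel)

theorem fr_3_5_5 : Fr ([3, 3, 3, 3, 3, 5]) :=
  fr_of (n := 20) (lens := [15]) (sg := [(15, 5, 0), (5, 1, 5)])
    (bs := dec 11 1171400150719080015021609001504181300150815040015180602001503070600151904010015060317001509021600151301150015)
    (by decide +kernel)

theorem fr_3_6_0 : Fr ([3, 3, 3, 3, 3, 3]) :=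
  fr_of (n := 18) (lens := [9, 9]) (sg := [(9, 3, 0), (9, 3, 3)])
    (bs := dec 15 61001090901110009090511070009151602000901170900091113060909140908000902131200091110040009071216000909141000091715130009120414000913020100091601050009)
    (by decide +kernel)

theorem fr_3_6_1 : Fr ([3, 3, 3, 3, 3, 3, 1]) :=
  fr_of (n := 19) (lens := [18]) (sg := [(18, 6, 0), (1, 1, 6)])
    (bs := dec 9 90710001813180800181501110018110203001805081600181704180018040501001807030500181609070009)
    (by decide +kernel)

theorem fr_3_6_4 : Fr ([3, 3, 3, 3, 3, 3, 4]) :=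
  fr_of (n := 22) (lens := [18]) (sg := [(18, 6, 0), (4, 1, 6)])
    (bs := dec 12 42107001810201700181605080018020115001819021000180904200018210704001817181300181108090018131914001805031800180709160009)
    (by decide +kernel)

theorem fr_3_6_6 : Fr ([3, 3, 3, 3, 3, 3, 6]) :=
  fr_of (n := 24) (lens := [18]) (sg := [(18, 6, 0), (6, 1, 6)])
    (bs := dec 14 10231300181621170018051916001815200700181718010018092214001811022300180407080018220104001807052100180803200018140419001818080300180209110009)
    (by decide +kernel)

theorem fr_3_7_0 : Fr ([3, 3, 3, 3, 3, 3, 3]) :=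
  fr_of (n := 21) (lens := [21]) (sg := [(21, 7, 0)])
    (bs := dec 9 200517002108041900210603120021161008002105081000210102130021170616002103010500211809010021)
    (by decide +kernel)

theorem fr_4_4_6 : Fr ([4, 4, 4, 4, 6]) :=
  fr_of (n := 22) (lens := [16]) (sg := [(16, 4, 0), (6, 1, 4)])
    (bs := dec 12 71914001605161000160121020016102013001609170300160318050016020721001620030100161105190016150618001617010700161602150016)
    (by decide +kernel)

theorem fr_6_4_2 : Fr ([6, 6, 6, 6, 2]) :=
  fr_of (n := 26) (lens := [24]) (sg := [(24, 4, 0), (2, 1, 4)])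
    (bs := dec 11 14070900240605230024221121002423011400242409020024032406002421031000240525030024010615002415102500241902130024)
    (by decide +kernel)

theorem ing1100 : Fr ([1, 1, 1, 1, 0, 0]) :=
  fr_of (n := 4) (lens := [3]) (sg := [(4, 4, 0)])
    (bs := dec 2 3010200030203010003)
    (by decide +kernel)

theorem ing1110 : Fr ([1, 1, 1, 1, 1, 0]) :=
  fr_of (n := 5) (lens := [5]) (sg := [(5, 5, 0)])
    (bs := dec 2 4010200050302040005)
    (by decide +kernel)

theorem ing2200 : Fr ([2, 2, 2, 2, 0, 0]) :=
  fr_of (n := 8) (lens := [3, 3]) (sg := [(6, 3, 0), (2, 1, 3)])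
    (bs := dec 8 1060503030204060303010507000307040500030406020003050106000305070403030207010003)
    (by decide +kernel)

theorem ing2220 : Fr ([2, 2, 2, 2, 2, 0]) :=
  fr_of (n := 10) (lens := [10]) (sg := [(10, 5, 0)])
    (bs := dec 4 804070010070103001001020800100403020010)
    (by decide +kernel)

theorem ing2222 : Fr ([2, 2, 2, 2, 2, 2]) :=
  fr_of (n := 12) (lens := [12]) (sg := [(12, 6, 0)])
    (bs := dec 5 10021100120504070012070504001201030500120401090012)
    (by decide +kernel)

theorem ing2224 : Fr ([2, 2, 2, 2, 2, 4]) :=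
  fr_of (n := 14) (lens := [10]) (sg := [(10, 5, 0), (4, 1, 5)])
    (bs := dec 8 2120800100411030010011304001008100600101303090010090212001011040100100301100010)
    (by decide +kernel)

theorem av_2_0 : Av 2 0 :=
  av_of (lens := [2]) (sg := [(2, 1)])
    (bs := dec 2 10100010101000001)
    (by decide +kernel)

theorem av_3_1 : Av 3 1 :=
  av_of (lens := [2]) (sg := [(2, 1), (1, 0)])
    (bs := dec 2 1020000020201010002)
    (by decide +kernel)

theorem av_4_0 : Av 4 0 :=
  av_of (lens := [4]) (sg := [(4, 1)])
    (bs := dec 2 1020000040301010004)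
    (by decide +kernel)

theorem av_4_4 : Av 4 4 :=
  av_of (lens := [3]) (sg := [(4, 0)])
    (bs := dec 2 3010200030203010003)
    (by decide +kernel)

theorem av_5_1 : Av 5 1 :=
  av_of (lens := [4]) (sg := [(4, 1), (1, 0)])
    (bs := dec 4 2020002030201000204010300040104000004)
    (by decide +kernel)

theorem av_5_5 : Av 5 5 :=
  av_of (lens := [5]) (sg := [(5, 0)])
    (bs := dec 2 4010200050302040005)
    (by decide +kernel)

theorem av_6_0 : Av 6 0 :=
  av_of (lens := [6]) (sg := [(6, 1)])
    (bs := dec 4 3030003050302000303020400060101050006)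
    (by decide +kernel)

theorem av_6_4 : Av 6 4 :=
  av_of (lens := []) (sg := [(4, 0), (1, 2), (1, 3)])
    (bs := dec 16 205050401050304020103040501010405030101050200010103050002010004040301000302010104040102010005010401050504000103020100010204030001010502030101030500010401020001)
    (by decide +kernel)

theorem av_7_1 : Av 7 1 :=
  av_of (lens := [6]) (sg := [(6, 1), (1, 0)])
    (bs := dec 4 602000006050102000603060100060203030006)
    (by decide +kernel)

theorem av_7_3 : Av 7 3 :=
  av_of (lens := [2, 2, 2]) (sg := [(2, 0), (2, 1), (2, 1), (1, 0)])
    (bs := dec 13 106030402030605020205030102020105020202020405000204060100020302020002040406020201030600020605030002040505040100050104010501040001)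
    (by decide +kernel)

theorem av_7_5 : Av 7 5 :=
  av_of (lens := [5]) (sg := [(5, 0), (1, 2), (1, 3)])
    (bs := dec 6 30601000504050300050602040005050102000505060605010606050501)
    (by decide +kernel)

theorem av_7_7 : Av 7 7 :=
  av_of (lens := [7]) (sg := [(7, 0)])
    (bs := dec 3 60102000705020400070403060007)
    (by decide +kernel)

theorem av_8_0 : Av 8 0 :=
  av_of (lens := [6]) (sg := [(6, 1), (1, 2), (1, 3)])
    (bs := dec 8 3060500060107020006000303000304030100030202070006050106000606070706010707060601)
    (by decide +kernel)

theorem av_8_2 : Av 8 2 :=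
  av_of (lens := []) (sg := [(2, 0), (1, 2), (1, 3), (1, 2), (1, 3), (1, 2), (1, 3)])
    (bs := dec 31 5040401000306020104060202010607040101030600010100020201010205030301040305010105070004010206050401030505020105050601010706060501060407020107040301010007070501040705060107030402010307020301010406030101070302010105020401070701060100060103010207060001050307000101020500010304040001060603000104050100010701020001)
    (by decide +kernel)

theorem av_8_4 : Av 8 4 :=
  av_of (lens := [2, 2, 2, 2]) (sg := [(4, 0), (2, 1), (2, 1)])
    (bs := dec 16 707030602070506020203070002020607010402010605020205040302020406030402050500040205060400020305010002070402000201070700020603050002040206000200030102010201030001)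
    (by decide +kernel)

theorem av_8_6 : Av 8 6 :=
  av_of (lens := []) (sg := [(6, 0), (1, 2), (1, 3)])
    (bs := dec 29 6070204010006010401010507030106040503010507070201070606020106030002010003050101050402010106060701010705000401010602050102070005010007030601030506010103040102010307050601040503020107070401010402000101020604030104070103010203070001010706000104060500010502010001060504000107040300010301020001)
    (by decide +kernel)

theorem av_8_8 : Av 8 8 :=
  av_of (lens := [7]) (sg := [(8, 0)])
    (bs := dec 4 701050007030702000701020400070603010007)
    (by decide +kernel)

theorem av_9_1 : Av 9 1 :=
  av_of (lens := [8]) (sg := [(8, 1), (1, 0)])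
    (bs := dec 6 201000808030700080501030008030800000801040500040604020004)
    (by decide +kernel)

theorem av_9_3 : Av 9 3 :=
  av_of (lens := [3, 3, 3]) (sg := [(3, 0), (3, 2), (3, 3)])
    (bs := dec 13 307060603040606030301060503030807000303050802030302040803030708060003080401000305050800030107020003040303000302060400030301070003)
    (by decide +kernel)

theorem av_9_5 : Av 9 5 :=
  av_of (lens := [4, 4]) (sg := [(4, 0), (4, 1), (1, 0)])
    (bs := dec 11 7080404040104060004050702000402080100040706030004030505000400050804040401080004050607040202060004020602040002)
    (by decide +kernel)

theorem av_9_7 : Av 9 7 :=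
  av_of (lens := [7]) (sg := [(7, 0), (1, 2), (1, 3)])
    (bs := dec 7 502060007020108000701070400070308050007070302000707080807010808070701)
    (by decide +kernel)

theorem av_9_9 : Av 9 9 :=
  av_of (lens := [8]) (sg := [(9, 0)])
    (bs := dec 5 7010400080403050008050807000808020300080604020004)
    (by decide +kernel)

theorem av_10_0 : Av 10 0 :=
  av_of (lens := [10]) (sg := [(10, 1)])
    (bs := dec 6 80306001005020200100201080010010400001009050400050405090005)
    (by decide +kernel)

theorem av_10_2 : Av 10 2 :=
  av_of (lens := [2, 2, 2, 2]) (sg := [(2, 0), (2, 1), (2, 1), (2, 1), (1, 2), (1, 3)])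
    (bs := dec 28 309020602060602000207090500020408070202020509000205070902020904070002030206000202040402020303000202090601020200090602020108030002070800060201060504020308040402050900040202070804020403080002070508020208070100020607070601040705060106050704010005010401050104000108090908010909080801)
    (by decide +kernel)

theorem av_10_4 : Av 10 4 :=
  av_of (lens := [4, 4]) (sg := [(4, 0), (4, 1), (1, 2), (1, 3)])
    (bs := dec 15 80403000402080100040109050404010707000405090200040708040404070508000403060400040005090404060109000405060704020206000402040206000208090908010909080801)
    (by decide +kernel)

theorem av_10_6 : Av 10 6 :=
  av_of (lens := [2, 2, 2, 2]) (sg := [(6, 0), (2, 1), (1, 2), (1, 3)])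
    (bs := dec 26 8070406020605070202050906020206060400020802070002050309000209070604020106090202070601040208040002020307010002040703020209050200020109050402070903000203090006020204080002060803060203080502020508000402010806000202050304010003010201040105000108090908010909080801)
    (by decide +kernel)

theorem av_10_8 : Av 10 8 :=
  av_of (lens := [8]) (sg := [(8, 0), (1, 2), (1, 3)])
    (bs := dec 8 6030700080302090008020804000808010600080709020008010405000408090908010909080801)
    (by decide +kernel)

theorem av_10_10 : Av 10 10 :=
  av_of (lens := [9]) (sg := [(10, 0)])
    (bs := dec 5 1040900090709020009080105000906030800090302040009)
    (by decide +kernel)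

theorem av_11_1 : Av 11 1 :=
  av_of (lens := [10]) (sg := [(10, 1), (1, 0)])
    (bs := dec 6 20410001001020600100710010010030302001005010700100005030010)
    (by decide +kernel)

theorem av_11_3 : Av 11 3 :=
  av_of (lens := [3, 3, 3]) (sg := [(3, 0), (3, 2), (3, 3), (1, 2), (1, 3)])
    (bs := dec 21 60808030310060703030007100303060609000307080100030904020003080505000304070600031001030003090605030302030400030107040603020403030307100403030310070003001001060308090003030409050603010908000309101009011010090901)
    (by decide +kernel)

theorem av_11_5 : Av 11 5 :=
  av_of (lens := [4, 4]) (sg := [(4, 0), (4, 1), (1, 0), (1, 2), (1, 3)])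
    (bs := dec 19 608020404060903000402100100040209070404051004040401080700041005050004030410000409060200040507090004010508040408010400040706050402030601040204020600020810090901101008090109101008011009090801)
    (by decide +kernel)

theorem av_11_7 : Av 11 7 :=
  av_of (lens := [2, 2, 2, 2, 2]) (sg := [(6, 0), (2, 1), (2, 1), (1, 0)])
    (bs := dec 32 2100506020007020402030410020210070102020705040202071000040200060602020306070402020601000210050700020707050002060803000201080504020410020802050910000202090804021009090602081006000208090302020808070602040308000201040900020110080202090204000205080002020609070801090708060105070406010603070201010900080108050904010301020001)
    (by decide +kernel)

theorem av_11_9 : Av 11 9 :=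
  av_of (lens := [9]) (sg := [(9, 0), (1, 2), (1, 3)])
    (bs := dec 8 2031000090602050009041006000905090100090801020009070409000909101009011010090901)
    (by decide +kernel)

theorem av_11_11 : Av 11 11 :=
  av_of (lens := [11]) (sg := [(11, 0)])
    (bs := dec 5 9040600110501070011030502001110020300110403100011)
    (by decide +kernel)

theorem av_13_5 : Av 13 5 :=
  av_of (lens := [4, 4, 4]) (sg := [(4, 0), (4, 1), (4, 1), (1, 0)])
    (bs := dec 22 1008110004070609000412040800040507040004110507000404111200040909060004041206080409100408041006080402090611040210090308040210100004040902040412100104040312090404020807040401050404040011030404081203000406010200040302010002)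
    (by decide +kernel)

theorem av_14_8 : Av 14 8 :=
  av_of (lens := [4, 4, 4]) (sg := [(8, 0), (4, 1), (1, 2), (1, 3)])
    (bs := dec 27 100801000409130200040313110804111208040412060300040010100404030802040412110904040712010804090906080407040900040609010404051012000406051100040513060404011204000402070600040311130004080513040413090500040401080004111009080202060004020610040802080210000212131312011313121201)
    (by decide +kernel)

theorem av_14_10 : Av 14 10 :=
  av_of (lens := [2, 2, 2, 2, 2, 2]) (sg := [(10, 0), (2, 1), (1, 2), (1, 3)])
    (bs := dec 50 2101308021109120602080612040203090504020305120002100602000209080300020507130002131111040212100400020209060002061103100210100306020708130602060405000211081004020513111002111307000209130408020910070402091110020206070402020403110002130208000212090702020313080202110609020201070904020010120202061301040200110906020105110202130400020207110100020113020602051100080205080102021112060802071208040209120510020312010602041203020201121000020009010801040705060102050304010703060201080109000112131312011313121201)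
    (by decide +kernel)


/-- There is a ring of order `m` with enough pairwise unit differences. -/
def Good (m a : ℕ) : Prop :=
  ∃ (R : Type) (_ : CommRing R) (_ : Fintype R) (μ : Fin 5 → R), Fintype.card R = m ∧
    ∀ i j : Fin 5, i ≠ j → i.val < a → j.val < a → IsUnit (μ i - μ j)

lemma good_field (F : Type) [Field F] [Finite F] : Good (Nat.card F) (Nat.card F) := by
  let := Fintype.ofFinite F
  have hpos : 0 < Nat.card F := Nat.card_pos
  refine ⟨F, inferInstance, inferInstance,
    fun i => (Finite.equivFin F).symm ⟨i % Nat.card F, Nat.mod_lt _ hpos⟩,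
    (Nat.card_eq_fintype_card).symm, fun i j hij hi hj => ?_⟩
  rw [isUnit_iff_ne_zero, sub_ne_zero]
  intro h
  have := (Finite.equivFin F).symm.injective h
  rw [Fin.mk.injEq, Nat.mod_eq_of_lt hi, Nat.mod_eq_of_lt hj] at this
  exact hij (Fin.ext this)

lemma Good.mono {m a b : ℕ} (h : Good m a) (hab : b ≤ a) : Good m b := by
  obtain ⟨R, h1, h2, μ, h3, h4⟩ := h
  exact ⟨R, h1, h2, μ, h3, fun i j hij hi hj => h4 i j hij (by omega) (by omega)⟩

lemma good_prime (p : ℕ) (hp : p.Prime) : Good p p := by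
  have := Fact.mk hp
  have := good_field (ZMod p)
  rwa [Nat.card_zmod] at this

lemma good_gf (p k : ℕ) (hp : p.Prime) (hk : k ≠ 0) : Good (p ^ k) (p ^ k) := by
  have := Fact.mk hp
  have := good_field (GaloisField p k)
  rwa [GaloisField.card p k hk] at this

lemma good3 : Good 3 3 := good_prime 3 (by norm_num)
lemma good4 : Good 4 4 := good_gf 2 2 (by norm_num) (by norm_num)
lemma good5 : Good 5 5 := good_prime 5 (by norm_num)
lemma good7 : Good 7 5 := (good_prime 7 (by norm_num)).mono (by norm_num)
lemma good8 : Good 8 5 := (good_gf 2 3 (by norm_num) (by norm_num)).mono (by norm_num)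
lemma good9 : Good 9 5 := (good_gf 3 2 (by norm_num) (by norm_num)).mono (by norm_num)
lemma good11 : Good 11 5 := (good_prime 11 (by norm_num)).mono (by norm_num)

lemma good_coprime (m : ℕ) (h2 : m % 2 ≠ 0) (h3 : m % 3 ≠ 0) : Good m 5 := by
  have : NeZero m := ⟨by rintro rfl; simp at h2⟩
  have u2 : IsUnit ((2 : ℕ) : ZMod m) := by
    rw [ZMod.isUnit_iff_coprime]
    exact (Nat.Prime.coprime_iff_not_dvd (by norm_num)).2 (by omega)
  have u3 : IsUnit ((3 : ℕ) : ZMod m) := by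
    rw [ZMod.isUnit_iff_coprime]
    exact (Nat.Prime.coprime_iff_not_dvd (by norm_num)).2 (by omega)
  have u4 : IsUnit ((4 : ℕ) : ZMod m) := by
    have := u2.mul u2
    norm_num at this ⊢
    exact this
  have key : ∀ i j : ℕ, i < j → j < 5 → IsUnit ((j : ZMod m) - (i : ZMod m)) := by
    intro i j hij hj
    rw [← Nat.cast_sub hij.le]
    have : j - i = 1 ∨ j - i = 2 ∨ j - i = 3 ∨ j - i = 4 := by omega
    rcases this with h | h | h | h <;> rw [h]
    · simp
    · exact u2
    · exact u3
    · exact u4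
  refine ⟨ZMod m, inferInstance, inferInstance, fun i => (i.val : ZMod m), ZMod.card m, ?_⟩
  intro i j hij hi hj
  rcases lt_or_gt_of_ne (fun h => hij (Fin.ext h) : i.val ≠ j.val) with h | h
  · rw [← neg_sub]; exact (key _ _ h hj).neg
  · exact key _ _ h hi

lemma FrF.perm {I J : Type} (e : J ≃ I) {w : I → ℕ} (h : FrF w) : FrF (fun j => w (e j)) := by
  let E : (Σ j, Fin (w (e j))) ≃ Σ i, Fin (w i) :=
    Equiv.sigmaCongrLeft (β := fun i => Fin (w i)) e
  refine Des.equiv E.symm h fun κ x x' => ?_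
  obtain ⟨y, rfl⟩ := E.surjective x
  obtain ⟨y', rfl⟩ := E.surjective x'
  rw [E.symm_apply_apply, E.symm_apply_apply]
  have hE : ∀ y, (E y).1 = e y.1 := fun y => rfl
  simp only [frs, hE, e.injective.eq_iff]

lemma exists_weight {R : Type} [Fintype R] (s c d : ℕ) (hs : s ≤ Fintype.card R) :
    ∃ f : R → ℕ, (∀ z, f z = c ∨ f z = d) ∧ ∑ z, f z = s * c + (Fintype.card R - s) * d ∧
      (s = 0 → ∀ z, f z = d) := by
  obtain ⟨S, hS, hc⟩ := Finset.exists_subset_card_eq (s := (Finset.univ : Finset R)) (n := s)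
    (by simpa using hs)
  refine ⟨fun z => if z ∈ S then c else d, fun z => ?_, ?_, ?_⟩
  · simp only; split_ifs <;> simp
  · have e : ∀ z : R, (if z ∈ S then c else d) = (if z ∈ S then c else 0) + (if z ∈ Sᶜ then d else 0) := by
      intro z; by_cases h : z ∈ S <;> simp [h]
    simp only [e, Finset.sum_add_distrib]
    rw [Finset.sum_ite_mem, Finset.sum_ite_mem, Finset.univ_inter, Finset.univ_inter]
    simp [hc, Finset.card_compl]
  · rintro rfl z
    have : S = ∅ := Finset.card_eq_zero.1 hc
    simp [this]

lemma fr6 {w : Fin 6 → ℕ} (h : FrF w) (l : List ℕ) (hl : l = List.ofFn w) : Fr l := by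
  subst hl
  refine FrF.perm (finCongr (by simp : (List.ofFn w).length = 6)) h |> fun h => ?_
  unfold Fr
  convert h using 2 with i
  simp only [List.get_eq_getElem, List.getElem_ofFn]
  rfl

lemma fr6' {l : List ℕ} (w : Fin 6 → ℕ) (h : Fr l) (hl : l = List.ofFn w) : FrF w := by
  subst hl
  have := FrF.perm (finCongr (by simp : 6 = (List.ofFn w).length)) h
  convert this using 2 with i
  simp only [List.get_eq_getElem, List.getElem_ofFn]
  rfl

lemma td_gen {m a : ℕ} (hg : Good m a) (q x y : ℕ) (s t c d c' d' : ℕ) (hs : s ≤ m) (ht : t ≤ m)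
    (ha3 : 3 ≤ a) (ha4 : a ≤ 3 → s = 0 ∧ d = 0) (ha5 : a ≤ 4 → t = 0 ∧ d' = 0)
    (hb : ∀ e e', (e = c ∨ e = d) → (e' = c' ∨ e' = d') → (s = 0 → e = d) → (t = 0 → e' = d') →
      Fr [q, q, q, q, e, e'])
    (hx : s * c + (m - s) * d = x) (hy : t * c' + (m - t) * d' = y) :
    Fr [m * q, m * q, m * q, m * q, x, y] := by
  obtain ⟨R, _, _, μ, rfl, hμ⟩ := hg
  obtain ⟨f, f1, f2, f3⟩ := exists_weight s c d hs
  obtain ⟨f', f1', f2', f3'⟩ := exists_weight t c' d' ht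
  let w : Fin 6 → R → ℕ := ![fun _ => q, fun _ => q, fun _ => q, fun _ => q, f, f']
  have h3 : ∀ i : Fin 5, (∃ z, w i.succ z ≠ 0) → i.val < a := by
    rintro i ⟨z, hz⟩
    have hi := i.2
    by_cases h4 : a ≤ 4
    · by_cases hi4 : i = 4
      · subst hi4
        exact absurd ((f3' (ha5 h4).1 z).trans (ha5 h4).2) hz
      · by_cases h3 : a ≤ 3
        · by_cases hi3 : i = 3
          · subst hi3
            exact absurd ((f3 (ha4 h3).1 z).trans (ha4 h3).2) hz
          · omega
        · omega
    · omega
  have := td μ w (fun i j hij hi hj => hμ i j hij (h3 i hi) (h3 j hj)) (fun g => by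
    refine fr6' _ (hb (f (g 4)) (f' (g 5)) (f1 _) (f1' _) (fun h => f3 h _) (fun h => f3' h _)) ?_
    simp [w, List.ofFn_succ])
  refine fr6 this _ ?_
  rw [← hx, ← hy, ← f2, ← f2']
  simp [w, List.ofFn_succ]

lemma ing2202 : Fr [2, 2, 2, 2, 0, 2] := by
  have := FrF.perm (Equiv.swap (4 : Fin 6) 5) (fr6' ![2, 2, 2, 2, 2, 0] ing2220 (by simp [List.ofFn_succ]))
  refine fr6 this _ ?_
  decide

theorem fr_w2 {m a : ℕ} (hg : Good m a) (s t : ℕ) (hs : s ≤ m) (ht : t ≤ m)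
    (ha3 : 3 ≤ a) (ha4 : a ≤ 3 → s = 0) (ha5 : a ≤ 4 → t = 0) :
    Fr [m * 2, m * 2, m * 2, m * 2, s * 2, t * 2] := by
  refine td_gen hg 2 _ _ s t 2 0 2 0 hs ht ha3 (fun h => ⟨ha4 h, rfl⟩) (fun h => ⟨ha5 h, rfl⟩)
    ?_ (by simp) (by simp)
  rintro e e' (rfl | rfl) (rfl | rfl) _ _
  · exact ing2222
  · exact ing2220
  · exact ing2202
  · exact ing2200

theorem fr_w1 {m a : ℕ} (hg : Good m a) (s : ℕ) (hs : s ≤ m)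
    (ha3 : 3 ≤ a) (ha4 : a ≤ 3 → s = 0) :
    Fr [m, m, m, m, s, 0] := by
  have := td_gen hg 1 s 0 s 0 1 0 0 0 hs (Nat.zero_le _) ha3 (fun h => ⟨ha4 h, rfl⟩)
    (fun h => ⟨rfl, rfl⟩) ?_ (by simp) (by simp)
  · simpa using this
  rintro e e' (rfl | rfl) (rfl | rfl) _ _
  · exact ing1110
  · exact ing1110
  · exact ing1100
  · exact ing1100

theorem fr_62 : Fr [10, 10, 10, 10, 10, 12] := by
  refine td_gen good5 2 10 12 5 1 2 2 4 2 (by norm_num) (by norm_num) (by norm_num) (by norm_num)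
    (by norm_num) ?_ (by norm_num) (by norm_num)
  rintro e e' (rfl | rfl) (rfl | rfl) _ _
  · exact ing2224
  · exact ing2222
  · exact ing2224
  · exact ing2222


def w1 (m s : ℕ) : List ℕ := [m, m, m, m, s, 0]
def w2 (m s t : ℕ) : List ℕ := [m * 2, m * 2, m * 2, m * 2, s * 2, t * 2]

lemma p1 {m a : ℕ} (hg : Good m a) (s : ℕ)
    (h : (s ≤ m ∧ 3 ≤ a ∧ (a ≤ 3 → s = 0)) := by decide) : Fr (w1 m s) :=
  fr_w1 hg s h.1 h.2.1 h.2.2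

lemma p2 {m a : ℕ} (hg : Good m a) (s t : ℕ)
    (h : (s ≤ m ∧ t ≤ m ∧ 3 ≤ a ∧ (a ≤ 3 → s = 0) ∧ (a ≤ 4 → t = 0)) := by decide) :
    Fr (w2 m s t) :=
  fr_w2 hg s t h.1 h.2.1 h.2.2.1 h.2.2.2.1 h.2.2.2.2

lemma av_0_0 : Av 0 0 :=
  ⟨id, id, fun _ => rfl, fun _ => rfl, fun _ => Iff.rfl, by simp, 0, fun _ x => x.elim0⟩

lemma av_1_1 : Av 1 1 := by
  refine ⟨id, id, fun _ => rfl, fun _ => rfl, fun _ => Iff.rfl, by simp, 0, fun κ x y => ?_⟩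
  rw [cnt_zero, Subsingleton.elim x y]
  fin_cases κ <;> simp [cms]

def FL : List (List ℕ) := [
  [2, 2, 2, 2, 2, 2], List.replicate 10 1 ++ [2], List.replicate 12 1, w1 3 0, List.replicate 9
  1 ++ [4], List.replicate 11 1 ++ [2], [2, 2, 2, 2, 2, 4], List.replicate 12 1 ++ [2],
  List.replicate 14 1, List.replicate 11 1 ++ [4], List.replicate 13 1 ++ [2], [3, 3, 3, 3, 3,
  1], List.replicate 14 1 ++ [2], w1 4 0, List.replicate 15 1 ++ [2], [3, 3, 3, 3, 3, 3],
  List.replicate 14 1 ++ [4], w1 4 2, [3, 3, 3, 3, 3, 3, 1], List.replicate 15 1 ++ [4], [3, 3,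
  3, 3, 3, 5], List.replicate 18 1 ++ [2], w1 4 4, [3, 3, 3, 3, 3, 3, 3], List.replicate 15 1 ++
  [6], [4, 4, 4, 4, 6], [3, 3, 3, 3, 3, 3, 4], List.replicate 18 1 ++ [4], [3, 3, 3, 3, 3, 3,
  6], List.replicate 17 1 ++ [7], w2 3 0 0, List.replicate 9 2 ++ [8], [6, 6, 6, 6, 2],
  List.replicate 19 1 ++ [7], List.replicate 10 1 ++ List.replicate 5 2 ++ [6], List.replicate
  18 1 ++ List.replicate 4 2, List.replicate 20 1 ++ [7], List.replicate 10 2 ++ [8], w1 7 0,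
  List.replicate 11 2 ++ [8], List.replicate 30 1, w1 7 2, List.replicate 24 1 ++ [7], w1 8 0,
  List.replicate 27 1 ++ [7], w1 8 2, w1 7 6, w1 8 4, List.replicate 30 1 ++ [8], w1 8 6, w2 5 0
  0, List.replicate 33 1 ++ [9], w2 5 1 0, w1 9 6, w2 5 2 0, w2 5 2 1, w1 9 9, w2 5 3 0, w2 5 2
  2, w2 5 5 0, w2 5 3 2, w2 5 4 2, w2 5 3 3, w2 5 5 2, w2 5 4 3, w2 5 4 4, w2 5 5 4, w2 5 5 5,
  [10, 10, 10, 10, 10, 12], w2 7 3 0, w2 7 4 0, w2 7 5 0, w2 7 3 2, w2 7 4 2, w2 7 3 3, w2 7 5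
  2, w2 7 4 3, w2 7 4 4, w2 7 5 4, w2 7 5 5, w2 7 6 5, w2 7 7 5, w2 8 5 4, w2 8 5 5, w2 8 6 5,
  w2 8 7 5, w2 8 8 5, w2 9 5 5, w2 9 6 5, w2 9 7 5, w2 9 8 5, w2 9 9 5, w2 11 5 2, w2 11 4 3, w2
  11 4 4, w2 11 5 4, w2 11 5 5, w2 11 6 5]

theorem fl_fr : List.Forall Fr FL := ⟨
  fr_2_6_0, fr_1_10_2, fr_1_11_1, p1 good3 0, fr_1_9_4, fr_1_11_2, fr_2_5_4, fr_1_12_2,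
  fr_1p13_1, fr_1_11_4, fr_1_13_2, fr_3_5_1, fr_1_14_2, p1 good4 0, fr_1_15_2, fr_3_6_0,
  fr_1_14_4, p1 good4 2, fr_3_6_1, fr_1_15_4, fr_3_5_5, fr_1_18_2, p1 good4 4, fr_3_7_0,
  fr_1_15_6, fr_4_4_6, fr_3_6_4, fr_1_18_4, fr_3_6_6, fr_1_17_7, p2 good3 0 0, fr_2_9_8,
  fr_6_4_2, fr_1_19_7, fr_1p10_2p5_6, fr_1p18_2p3_2, fr_1_20_7, fr_2_10_8, p1 good7 0,
  fr_2_11_8, fr_1_29_1, p1 good7 2, fr_1p24_7, p1 good8 0, fr_1_27_7, p1 good8 2, p1 good7 6,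
  p1 good8 4, fr_1_30_8, p1 good8 6, p2 good5 0 0, fr_1_33_9, p2 good5 1 0, p1 good9 6,
  p2 good5 2 0, p2 good5 2 1, p1 good9 9, p2 good5 3 0, p2 good5 2 2, p2 good5 5 0,
  p2 good5 3 2, p2 good5 4 2, p2 good5 3 3, p2 good5 5 2, p2 good5 4 3, p2 good5 4 4,
  p2 good5 5 4, p2 good5 5 5, fr_62, p2 good7 3 0, p2 good7 4 0, p2 good7 5 0, p2 good7 3 2,
  p2 good7 4 2, p2 good7 3 3, p2 good7 5 2, p2 good7 4 3, p2 good7 4 4, p2 good7 5 4,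
  p2 good7 5 5, p2 good7 6 5, p2 good7 7 5, p2 good8 5 4, p2 good8 5 5, p2 good8 6 5,
  p2 good8 7 5, p2 good8 8 5, p2 good9 5 5, p2 good9 6 5, p2 good9 7 5, p2 good9 8 5,
  p2 good9 9 5, p2 good11 5 2, p2 good11 4 3, p2 good11 4 4, p2 good11 5 4, p2 good11 5 5,
  p2 good11 6 5⟩

def DL : List (ℕ × ℕ) := [(0, 0), (1, 1),
  (2, 0), (3, 1), (4, 0), (4, 4), (5, 1), (5, 5), (6, 0), (6, 4), (7, 1), (7, 3), (7, 5),
  (7, 7), (8, 0), (8, 2), (8, 4), (8, 6), (8, 8), (9, 1), (9, 3), (9, 5), (9, 7), (9, 9),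
  (10, 0), (10, 2), (10, 4), (10, 6), (10, 8), (10, 10), (11, 1), (11, 3), (11, 5), (11, 7),
  (11, 9), (11, 11), (13, 5), (14, 8), (14, 10)]

theorem dl_av : List.Forall (fun p : ℕ × ℕ => Av p.1 p.2) DL := ⟨av_0_0, av_1_1,
  av_2_0, av_3_1, av_4_0, av_4_4, av_5_1, av_5_5, av_6_0, av_6_4, av_7_1, av_7_3, av_7_5,
  av_7_7, av_8_0, av_8_2, av_8_4, av_8_6, av_8_8, av_9_1, av_9_3, av_9_5, av_9_7, av_9_9,
  av_10_0, av_10_2, av_10_4, av_10_6, av_10_8, av_10_10, av_11_1, av_11_3, av_11_5, av_11_7,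
  av_11_9, av_11_11, av_13_5, av_14_8, av_14_10⟩

def exl : List (ℕ × ℕ) := [(2,2),(3,3),(4,2),(6,6),(5,3),(6,2),(12,2),(12,6),(12,8),(13,3),(13,7),(14,2),(14,6),(15,3),(15,7),(15,9),(16,2),(16,10),(17,3),(17,7),(17,11),(18,2),(18,10),(19,3),(19,11),(20,2),(20,14),(21,3),(21,11),(22,2),(22,14),(23,15),(24,2),(24,14),(25,15)]

def memP (n k : ℕ) : List (ℕ × ℕ) → Bool
  | [] => false
  | (a, b) :: l => (Nat.beq n a && Nat.beq k b) || memP n k l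

lemma memP_iff (n k : ℕ) (l : List (ℕ × ℕ)) : memP n k l = true ↔ (n, k) ∈ l := by
  induction l with
  | nil => simp [memP]
  | cons p l ih =>
    obtain ⟨a, b⟩ := p
    simp [memP, ih, beq_dec]

/-- Required pairs. -/
def reqb (n k : ℕ) : Bool :=
  Nat.ble k n && (Nat.beq ((n - k) % 2) 0 && (Nat.ble 26 n || !memP n k exl))

def lorTo (n : ℕ) (f : ℕ → ℕ) : ℕ := Nat.rec 0 (fun i s => Nat.lor s (f i)) n

lemma lorTo_bit (n : ℕ) (f : ℕ → ℕ) (k : ℕ) :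
    (lorTo n f).testBit k = true ↔ ∃ i < n, (f i).testBit k = true := by
  induction n with
  | zero => simp [lorTo]
  | succ n ih =>
    have : lorTo (n + 1) f = lorTo n f ||| f n := rfl
    rw [this, Nat.testBit_or, Bool.or_eq_true, ih]
    constructor
    · rintro (⟨i, hi, h⟩ | h)
      · exact ⟨i, by omega, h⟩
      · exact ⟨n, by omega, h⟩
    · rintro ⟨i, hi, h⟩
      rcases Nat.lt_succ_iff_lt_or_eq.1 hi with h' | rfl
      · exact Or.inl ⟨i, h', h⟩
      · exact Or.inr h

def rq (n : ℕ) : ℕ := lorTo (n + 1) fun k => bif reqb n k then 2 ^ k else 0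

lemma rq_bit (n k : ℕ) : (rq n).testBit k = true ↔ reqb n k = true := by
  rw [rq, lorTo_bit]
  constructor
  · rintro ⟨i, hi, h⟩
    cases hr : reqb n i
    · simp [hr] at h
    · rw [hr, cond_true, Nat.testBit_two_pow] at h
      rw [← of_decide_eq_true h]; exact hr
  · intro h
    have hk : k ≤ n := by
      simp only [reqb, Bool.and_eq_true, Nat.ble_eq] at h; exact h.1
    exact ⟨k, by omega, by simp [h]⟩

def conv (N A B : ℕ) : ℕ := lorTo N fun j => bif Nat.testBit A j then Nat.shiftLeft B j else 0

lemma conv_bit (N A B k : ℕ) (h : (conv N A B).testBit k = true) :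
    ∃ j i, A.testBit j = true ∧ B.testBit i = true ∧ j + i = k := by
  rw [conv, lorTo_bit] at h
  obtain ⟨j, -, h⟩ := h
  cases hr : A.testBit j
  · simp [hr] at h
  · rw [hr, cond_true] at h
    change (B <<< j).testBit k = true at h
    rw [Nat.testBit_shiftLeft, Bool.and_eq_true, decide_eq_true_iff] at h
    exact ⟨j, k - j, hr, h.2, by omega⟩

def ssum (ε : ℕ) : List ℕ → ℕ
  | [] => 1
  | w :: l => conv (w + 1) (Nat.shiftRight (rq (w + ε)) ε) (ssum ε l)

lemma ssum_sound (ε : ℕ) (l : List ℕ) : ∀ k, (ssum ε l).testBit k = true →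
    ∃ j : Fin l.length → ℕ, (∀ i, reqb (l.get i + ε) (j i + ε) = true) ∧ ∑ i, j i = k := by
  induction l with
  | nil =>
    intro k h
    refine ⟨fun _ => 0, fun i => i.elim0, ?_⟩
    simp only [ssum] at h
    rw [Nat.testBit_one_eq_true_iff_self_eq_zero] at h
    simp [h]
  | cons w l ih =>
    intro k h
    obtain ⟨a, b, ha, hb, rfl⟩ := conv_bit _ _ _ _ h
    obtain ⟨j, hj, rfl⟩ := ih b hb
    change (rq (w + ε) >>> ε).testBit a = true at ha
    rw [Nat.testBit_shiftRight, rq_bit, Nat.add_comm ε a] at ha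
    refine ⟨Fin.cons (α := fun _ => ℕ) a j, fun i => ?_, ?_⟩
    · induction i using Fin.cases with
      | zero => exact ha
      | succ i => exact hj i
    · exact Fin.sum_univ_succ _

theorem fillL {l : List ℕ} (hF : Fr l) (ε : ℕ) (hε : ε ≤ 1) (j : Fin l.length → ℕ)
    (h : ∀ i, Av (l.get i + ε) (j i + ε)) : Av (l.sum + ε) (∑ i, j i + ε) := by
  have : Subsingleton (Fin ε) := by
    have : ε = 0 ∨ ε = 1 := by omega
    rcases this with rfl | rfl <;> infer_instance
  have := fill (E := Fin ε) (fun i => l.get i) j hF (fun i => by simpa using h i)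
  have e : ∑ i : Fin l.length, l.get i = l.sum := by
    rw [← List.sum_ofFn, List.ofFn_get]
  rw [e] at this
  simpa using this

def allLt (n ε : ℕ) : List ℕ → Bool
  | [] => true
  | w :: l => Nat.ble (w + ε + 1) n && allLt n ε l

lemma allLt_get (n ε : ℕ) (l : List ℕ) (h : allLt n ε l = true) : ∀ w ∈ l, w + ε < n := by
  induction l with
  | nil => simp
  | cons w l ih =>
    simp only [allLt, Bool.and_eq_true, Nat.ble_eq] at h
    intro v hv
    rcases List.mem_cons.1 hv with rfl | hv
    · exact h.1
    · exact ih h.2 v hv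

/-- Values of `k` covered for `n` by a frame. -/
def cov1 (n ε : ℕ) (l : List ℕ) : ℕ :=
  bif Nat.beq (l.sum + ε) n && allLt n ε l then Nat.shiftLeft (ssum ε l) ε else 0

def covL (n : ℕ) : List (List ℕ) → ℕ
  | [] => 0
  | l :: L => Nat.lor (Nat.lor (cov1 n 0 l) (cov1 n 1 l)) (covL n L)

lemma cov1_sound (n ε : ℕ) (hε : ε ≤ 1) (l : List ℕ) (hF : Fr l)
    (ih : ∀ m < n, ∀ k, reqb m k = true → Av m k) (k : ℕ) (h : (cov1 n ε l).testBit k = true) :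
    Av n k := by
  unfold cov1 at h
  cases hc : (Nat.beq (l.sum + ε) n && allLt n ε l)
  · simp [hc] at h
  · rw [hc, cond_true] at h
    rw [Bool.and_eq_true, Nat.beq_eq] at hc
    change (ssum ε l <<< ε).testBit k = true at h
    rw [Nat.testBit_shiftLeft, Bool.and_eq_true, decide_eq_true_iff] at h
    obtain ⟨j, hj, hk⟩ := ssum_sound _ _ _ h.2
    have := fillL hF ε hε j (fun i => ih _ (allLt_get _ _ _ hc.2 _ (List.get_mem _ _)) _ (hj i))
    rw [hc.1, hk, Nat.sub_add_cancel h.1] at this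
    exact this

lemma covL_sound (n : ℕ) (ih : ∀ m < n, ∀ k, reqb m k = true → Av m k) (L : List (List ℕ))
    (hL : List.Forall Fr L) (k : ℕ) (h : (covL n L).testBit k = true) : Av n k := by
  induction L with
  | nil => simp [covL] at h
  | cons l L ihL =>
    rw [List.forall_cons] at hL
    change ((cov1 n 0 l ||| cov1 n 1 l) ||| covL n L).testBit k = true at h
    rw [Nat.testBit_or, Nat.testBit_or, Bool.or_eq_true, Bool.or_eq_true] at h
    rcases h with (h | h) | h
    · exact cov1_sound n 0 (by omega) l hL.1 ih k h
    · exact cov1_sound n 1 (by omega) l hL.1 ih k h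
    · exact ihL hL.2 h

/-- Every required `k` is covered. -/
def okn (n : ℕ) : Bool :=
  allTo (n + 1) fun k => !reqb n k || (memP n k DL || Nat.testBit (covL n FL) k)

theorem okn_all : allTo 112 okn = true := by decide +kernel

theorem small (n : ℕ) (hn : n < 112) (ih : ∀ m < n, ∀ k, reqb m k = true → Av m k)
    (k : ℕ) (h : reqb n k = true) : Av n k := by
  have h1 := (allTo_iff _ _).1 okn_all n hn
  have hk : k ≤ n := by
    simp only [reqb, Bool.and_eq_true, Nat.ble_eq] at h; exact h.1
  have h2 := (allTo_iff _ _).1 h1 k (by omega)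
  simp only [h, Bool.not_true, Bool.false_or, Bool.or_eq_true, memP_iff] at h2
  rcases h2 with h2 | h2
  · exact List.forall_iff_forall_mem.1 dl_av _ h2
  · exact covL_sound n ih FL fl_fr k h2


lemma reqb_of (n k : ℕ) (hk : k ≤ n) (he : (n - k) % 2 = 0) (h : n < 26 → (n, k) ∉ exl) :
    reqb n k = true := by
  simp only [reqb, Bool.and_eq_true, Nat.ble_eq, Nat.beq_eq, Bool.or_eq_true, Bool.not_eq_true']
  refine ⟨hk, he, ?_⟩
  by_cases hn : 26 ≤ n
  · exact Or.inl hn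
  · right
    have := h (by omega)
    rw [← memP_iff] at this
    simpa using this

lemma reqb_zero (s ε : ℕ) (hε : ε ≤ 1) : reqb (s * 2 + ε) (0 + ε) = true := by
  refine reqb_of _ _ (by omega) (by omega) (fun _ h => ?_)
  simp only [exl, List.mem_cons, Prod.mk.injEq, List.not_mem_nil, or_false] at h
  omega

lemma reqb_full (s ε : ℕ) (hε : ε ≤ 1) (h1 : s ≠ 1) (h3 : s ≠ 3) :
    reqb (s * 2 + ε) (s * 2 + ε) = true := by
  refine reqb_of _ _ (by omega) (by omega) (fun _ h => ?_)
  simp only [exl, List.mem_cons, Prod.mk.injEq, List.not_mem_nil, or_false] at h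
  omega

lemma exists_m (N : ℕ) (hN : 56 ≤ N) : ∃ m s t : ℕ, 13 ≤ m ∧ m % 2 ≠ 0 ∧ m % 3 ≠ 0 ∧
    N = 4 * m + s + t ∧ s ≤ m ∧ t ≤ m ∧ s ≠ 1 ∧ s ≠ 3 ∧ t ≠ 1 ∧ t ≠ 3 := by
  have h : ∃ m r : ℕ, 13 ≤ m ∧ m % 2 ≠ 0 ∧ m % 3 ≠ 0 ∧ N = 4 * m + r ∧ 4 ≤ r ∧ r ≤ 2 * m := by
    obtain ⟨q, ρ, hρ, rfl⟩ : ∃ q ρ, ρ < 24 ∧ N = 24 * q + ρ + 4 :=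
      ⟨(N - 4) / 24, (N - 4) % 24, by omega, by omega⟩
    by_cases c1 : ρ < 4
    · exact ⟨6 * q - 1, 8 + ρ, by omega, by omega, by omega, by omega, by omega, by omega⟩
    · by_cases c2 : ρ < 20
      · exact ⟨6 * q + 1, ρ, by omega, by omega, by omega, by omega, by omega, by omega⟩
      · exact ⟨6 * q + 5, ρ - 16, by omega, by omega, by omega, by omega, by omega, by omega⟩
  obtain ⟨m, r, h1, h2, h3, h4, h5, h6⟩ := h
  by_cases c1 : r ≤ m
  · exact ⟨m, r, 0, by omega⟩
  · by_cases c2 : r - m = 1 ∨ r - m = 3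
    · exact ⟨m, m - 1, r - m + 1, by omega⟩
    · exact ⟨m, m, r - m, by omega⟩

lemma four (L m : ℕ) (h : L ≤ 4 * m) : ∃ a b c d : ℕ, a ≤ m ∧ b ≤ m ∧ c ≤ m ∧ d ≤ m ∧
    a + b + c + d = L :=
  ⟨min L m, min (L - m) m, min (L - 2 * m) m, L - 3 * m, by omega⟩

theorem big (n : ℕ) (hn : 112 ≤ n) (ih : ∀ m < n, ∀ k, reqb m k = true → Av m k)
    (k : ℕ) (h : reqb n k = true) : Av n k := by
  simp only [reqb, Bool.and_eq_true, Nat.ble_eq, Nat.beq_eq] at h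
  obtain ⟨N, ε, hε, rfl⟩ : ∃ N ε, ε ≤ 1 ∧ n = 2 * N + ε :=
    ⟨n / 2, n % 2, by omega, by omega⟩
  obtain ⟨K, rfl⟩ : ∃ K, k = 2 * K + ε := ⟨(k - ε) / 2, by omega⟩
  obtain ⟨m, s, t, hm, hm2, hm3, hN, hs, ht, hs1, hs3, ht1, ht3⟩ := exists_m N (by omega)
  have hF := fr_w2 (good_coprime m hm2 hm3) s t hs ht (by omega) (by omega) (by omega)
  obtain ⟨L, u, v, hL, hu, hv, hK⟩ : ∃ L u v, L ≤ 4 * m ∧ (u = 0 ∨ u = s) ∧ (v = 0 ∨ v = t) ∧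
      K = L + u + v := by
    by_cases c1 : K ≤ 4 * m
    · exact ⟨K, 0, 0, by omega⟩
    · by_cases c2 : K ≤ 4 * m + s
      · exact ⟨K - s, s, 0, by omega⟩
      · exact ⟨K - s - t, s, t, by omega⟩
  obtain ⟨a, b, c, d, ha, hb, hc, hd, hsum⟩ := four L m hL
  have hA : ∀ x, x ≤ m → Av (m * 2 + ε) (x * 2 + ε) := fun x hx =>
    ih _ (by omega) _ (reqb_of _ _ (by omega) (by omega) (by omega))
  have hB : ∀ s, s ≤ m → s ≠ 1 → s ≠ 3 → ∀ u, (u = 0 ∨ u = s) → Av (s * 2 + ε) (u * 2 + ε) := by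
    rintro s hs hs1 hs3 u (rfl | rfl)
    · exact ih _ (by omega) _ (by simpa using reqb_zero s ε hε)
    · exact ih _ (by omega) _ (reqb_full _ ε hε hs1 hs3)
  have := fillL hF ε hε ![a * 2, b * 2, c * 2, d * 2, u * 2, v * 2] (by
    intro i
    fin_cases i
    · exact hA a ha
    · exact hA b hb
    · exact hA c hc
    · exact hA d hd
    · exact hB s hs hs1 hs3 u hu
    · exact hB t ht ht1 ht3 v hv)
  have e1 : [m * 2, m * 2, m * 2, m * 2, s * 2, t * 2].sum = 2 * N := by
    simp; omega
  have e2 : ∑ i, (![a * 2, b * 2, c * 2, d * 2, u * 2, v * 2] : Fin 6 → ℕ) i = 2 * K := by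
    simp [Fin.sum_univ_succ]; omega
  rw [e1] at this
  exact (congrArg (fun x => Av (2 * N + ε) (x + ε)) e2).mp this

theorem all_av (n : ℕ) : ∀ k, reqb n k = true → Av n k := by
  induction n using Nat.strong_induction_on with
  | _ n ih =>
    intro k h
    by_cases hn : n < 112
    · exact small n hn ih k h
    · exact big n (by omega) ih k h


end CM

/-- For every `n ≥ 2`, `k ≤ n` with `n - k` even, a CMDRR(n,k) exists, except
for the 4 known exceptions and the 31 possible exceptions. -/
theorem cmdrr_existence (n k : ℕ) (hn : 2 ≤ n) (hk : k ≤ n) (he : Even (n - k))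
    (hex : (n, k) ∉ ([(2,2),(3,3),(4,2),(6,6),(5,3),(6,2),(12,2),(12,6),(12,8),(13,3),(13,7),(14,2),(14,6),(15,3),(15,7),(15,9),(16,2),(16,10),(17,3),(17,7),(17,11),(18,2),(18,10),(19,3),(19,11),(20,2),(20,14),(21,3),(21,11),(22,2),(22,14),(23,15),(24,2),(24,14),(25,15)] : List (ℕ × ℕ))) :
    Nonempty (CMDRR n k) := by 
  refine (CM.all_av n k (CM.reqb_of n k hk (Nat.even_iff.1 he) (fun _ => hex))).cmdrr
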